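/- arXiv:1711.08936 — 4 statements merged into one kernel-verified Lean document; each statement's English description precedes it below -/
import Mathlib

section
/- Let h : ℝ^p × ℝ → ℝ be continuous, strictly positive on a compact product set K × [a,b] with K ⊂ ℝ^p compact, and zero outside K × [a,b], and suppose ∫ h(z,t) dt > 0 for every z ∈ K. Define the conditional cumulative distribution F(x | z) = (∫_{-∞}^{x} h(z,t) dt) / (∫_{ℝ} h(z,t) dt) for z ∈ K. Then (z,x) ↦ F(x|z) is jointly continuous on K × [a,b], for each fixed z ∈ K the map x ↦ F(x|z) is strictly increasing from [a,b] onto [0,1], and the conditional quantile function Q : K × [0,1] → [a,b] defined by Q(z,u) = (F(·|z))^{-1}(u) is jointly continuous on K × [0,1]. -/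
open MeasureTheory Set

/-!
For `z` in `K` the conditional CDF is a primitive of a function positive inside `[a, b]`, divided by
its total mass, so it increases strictly from `0` to `1`. Extending `h` constantly in `t` beyond
`[a, b]` makes it continuous on `K × ℝ`, so the primitive is jointly continuous. The quantile is
jointly continuous because `F(· | z)` is strictly increasing: the inequality `c < Q(z, u)` reads
`F(c | z) < u`, an open condition on `(z, u)`, and likewise for `Q(z, u) < c`.
-/

/-- The cumulative distribution function of the probability law on `ℝ` whose density is proportional
to `f`. The conditional CDF `F(x | z)` of a joint density `h` is `densityCDF (h z) x`. If `∫ t, f t`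
is zero or undefined, the value is the junk value `0`. -/
noncomputable def densityCDF (f : ℝ → ℝ) (x : ℝ) : ℝ :=
  (∫ t in Iic x, f t) / ∫ t, f t

/-- The quantile function of the density proportional to `f` on `[a, b]`: the inverse of
`densityCDF f` on `[a, b]`. The conditional quantile `Q(z, u)` of a joint density `h` is
`densityQuantile a b (h z) u`. Outside the image of `[a, b]` its value is arbitrary. -/
noncomputable def densityQuantile (a b : ℝ) (f : ℝ → ℝ) : ℝ → ℝ :=
  Function.invFunOn (densityCDF f) (Icc a b)

/-- `f` is an unnormalised probability density on the nondegenerate interval `[a, b]`, positive in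
its interior. Values at the endpoints are unconstrained, so that densities vanishing there are
included. -/
structure IsPosDensityOn (a b : ℝ) (f : ℝ → ℝ) : Prop where
  lt : a < b
  integrableOn : IntegrableOn f (Icc a b)
  pos : ∀ t ∈ Ioo a b, 0 < f t
  eq_zero : ∀ t ∉ Icc a b, f t = 0

section ParametricInverse

variable {X α β : Type*} [TopologicalSpace X]
  [LinearOrder α] [TopologicalSpace α] [OrderTopology α]
  [LinearOrder β] [TopologicalSpace β] [OrderClosedTopology β]

theorem continuousOn_uncurry_of_strictMonoOn_of_rightInvOn {K : Set X} {S : Set α} {T : Set β}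
    [S.OrdConnected] {F : X → α → β} {Q : X → β → α}
    (hF : ∀ x ∈ S, ContinuousOn (fun z => F z x) K)
    (hmono : ∀ z ∈ K, StrictMonoOn (F z) S)
    (hmaps : ∀ z ∈ K, MapsTo (Q z) T S)
    (hinv : ∀ z ∈ K, RightInvOn (Q z) (F z) T) :
    ContinuousOn (fun q : X × β => Q q.1 q.2) (K ×ˢ T) := by
  rintro ⟨z₀, u₀⟩ ⟨hz₀, hu₀⟩
  have hF' : ∀ x ∈ S, ContinuousWithinAt (fun q : X × β => F q.1 x) (K ×ˢ T) (z₀, u₀) :=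
    fun x hx => (hF x hx).comp continuousOn_fst (fun q hq => hq.1) _ ⟨hz₀, hu₀⟩
  have hQ₀ : Q z₀ u₀ ∈ S := hmaps z₀ hz₀ hu₀
  have hFQ₀ : F z₀ (Q z₀ u₀) = u₀ := hinv z₀ hz₀ hu₀
  refine tendsto_order.2 ⟨fun c hc => ?_, fun c hc => ?_⟩
  · by_cases hcS : c ∈ S
    · have hlt : F z₀ c < u₀ := (hmono z₀ hz₀ hcS hQ₀ hc).trans_eq hFQ₀
      filter_upwards [(hF' c hcS).eventually_lt continuousWithinAt_snd hlt, self_mem_nhdsWithin]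
        with q hq ⟨hz, hu⟩
      exact ((hmono q.1 hz).lt_iff_lt hcS (hmaps q.1 hz hu)).1 (hq.trans_eq (hinv q.1 hz hu).symm)
    · filter_upwards [self_mem_nhdsWithin] with q ⟨hz, hu⟩
      exact lt_of_not_ge fun hle => hcS (S.Icc_subset (hmaps q.1 hz hu) hQ₀ ⟨hle, hc.le⟩)
  · by_cases hcS : c ∈ S
    · have hlt : u₀ < F z₀ c := hFQ₀.symm.trans_lt (hmono z₀ hz₀ hQ₀ hcS hc)
      filter_upwards [continuousWithinAt_snd.eventually_lt (hF' c hcS) hlt, self_mem_nhdsWithin]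
        with q hq ⟨hz, hu⟩
      exact ((hmono q.1 hz).lt_iff_lt (hmaps q.1 hz hu) hcS).1 ((hinv q.1 hz hu).trans_lt hq)
    · filter_upwards [self_mem_nhdsWithin] with q ⟨hz, hu⟩
      exact lt_of_not_ge fun hle => hcS (S.Icc_subset hQ₀ (hmaps q.1 hz hu) ⟨hc.le, hle⟩)

end ParametricInverse

section Primitive

variable {E : Type*} [NormedAddCommGroup E] [NormedSpace ℝ E]
  {μ : Measure ℝ} [NullSingletonClass μ] {a b x : ℝ}

theorem continuousOn_parametric_primitive {X : Type*} [TopologicalSpace X]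
    [IsLocallyFiniteMeasure μ] {K : Set X} {h : X → ℝ → E} (hab : a ≤ b)
    (hcont : ContinuousOn (fun q : X × ℝ => h q.1 q.2) (K ×ˢ Icc a b)) :
    ContinuousOn (fun q : X × ℝ => ∫ t in a..q.2, h q.1 t ∂μ) (K ×ˢ Icc a b) := by
  let g : K → ℝ → E := fun z t => h z (projIcc a b hab t)
  have hg : Continuous g.uncurry :=
    hcont.comp_continuous (f := fun q : K × ℝ => ((q.1 : X), (projIcc a b hab q.2 : ℝ)))
      (by fun_prop) fun q => ⟨q.1.2, (projIcc a b hab q.2).2⟩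
  have hG : Continuous fun q : K × ℝ => ∫ t in a..q.2, g q.1 t ∂μ :=
    intervalIntegral.continuous_parametric_primitive_of_continuous hg
  rw [continuousOn_iff_continuous_domRestrict]
  refine (hG.comp (by fun_prop : Continuous fun q : ↥(K ×ˢ Icc a b) =>
    ((⟨q.1.1, q.2.1⟩ : K), q.1.2))).congr ?_
  rintro ⟨⟨z, x⟩, hz, hx⟩
  refine intervalIntegral.integral_congr fun t ht => ?_
  rw [uIcc_of_le hx.1] at ht
  exact congrArg (h z) (congrArg Subtype.val (projIcc_of_mem hab ⟨ht.1, ht.2.trans hx.2⟩))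

theorem strictMonoOn_primitive_of_pos_on {f : ℝ → ℝ} (hf : IntegrableOn f (Icc a b))
    (hpos : ∀ t ∈ Ioo a b, 0 < f t) :
    StrictMonoOn (fun x => ∫ t in a..x, f t) (Icc a b) := by
  intro x hx y hy hxy
  have hint : ∀ {c d}, c ∈ Icc a b → d ∈ Icc a b → IntervalIntegrable f volume c d :=
    fun hc hd => (hf.mono_set (ordConnected_Icc.uIcc_subset hc hd)).intervalIntegrable
  have ha : a ∈ Icc a b := ⟨le_rfl, hx.1.trans hx.2⟩
  have hincr : 0 < ∫ t in x..y, f t :=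
    intervalIntegral.intervalIntegral_pos_of_pos_on (hint hx hy)
      (fun t ht => hpos t ⟨hx.1.trans_lt ht.1, ht.2.trans_le hy.2⟩) hxy
  exact sub_pos.1 <| hincr.trans_eq
    (intervalIntegral.integral_interval_sub_left (hint ha hy) (hint ha hx)).symm

theorem setIntegral_Iic_eq_intervalIntegral {f : ℝ → E} (hx : a ≤ x) (hzero : ∀ t < a, f t = 0) :
    ∫ t in Iic x, f t ∂μ = ∫ t in a..x, f t ∂μ := by
  rw [intervalIntegral.integral_of_le hx, ← integral_Icc_eq_integral_Ioc]
  exact setIntegral_eq_of_subset_of_forall_sdiff_eq_zero measurableSet_Iic Icc_subset_Iic_self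
    fun t ht => hzero t (lt_of_not_ge fun hat => ht.2 ⟨hat, ht.1⟩)

theorem integral_eq_intervalIntegral_of_forall_notMem_Icc {f : ℝ → E} (hab : a ≤ b)
    (hzero : ∀ t ∉ Icc a b, f t = 0) :
    ∫ t, f t ∂μ = ∫ t in a..b, f t ∂μ := by
  rw [intervalIntegral.integral_of_le hab, ← integral_Icc_eq_integral_Ioc]
  exact (setIntegral_eq_integral_of_forall_compl_eq_zero hzero).symm

end Primitive

section DensityCDF

variable {a b : ℝ} {f : ℝ → ℝ}

theorem densityCDF_eq_intervalIntegral_div (hzero : ∀ t < a, f t = 0) {x : ℝ} (hx : a ≤ x) :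
    densityCDF f x = (∫ t in a..x, f t) / ∫ t, f t := by
  rw [densityCDF, setIntegral_Iic_eq_intervalIntegral hx hzero]

theorem densityCDF_left (hzero : ∀ t < a, f t = 0) : densityCDF f a = 0 := by
  rw [densityCDF_eq_intervalIntegral_div hzero le_rfl, intervalIntegral.integral_same, zero_div]

theorem densityCDF_right (hzero : ∀ t > b, f t = 0) (hmass : ∫ t, f t ≠ 0) :
    densityCDF f b = 1 := by
  have hIic : ∫ t in Iic b, f t = ∫ t, f t :=
    setIntegral_eq_integral_of_forall_compl_eq_zero fun t ht => hzero t (not_le.1 ht)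
  rw [densityCDF, hIic, div_self hmass]

theorem continuousOn_densityCDF (hab : a ≤ b) (hf : IntegrableOn f (Icc a b))
    (hzero : ∀ t < a, f t = 0) :
    ContinuousOn (densityCDF f) (Icc a b) := by
  rw [← uIcc_of_le hab] at hf ⊢
  refine ((intervalIntegral.continuousOn_primitive_interval hf).div_const (∫ t, f t)).congr ?_
  intro x hx
  exact densityCDF_eq_intervalIntegral_div hzero (uIcc_of_le hab ▸ hx).1

namespace IsPosDensityOn

theorem eq_zero_of_lt (hf : IsPosDensityOn a b f) : ∀ t < a, f t = 0 :=
  fun t ht => hf.eq_zero t (notMem_Icc_of_lt ht)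

theorem eq_zero_of_gt (hf : IsPosDensityOn a b f) : ∀ t > b, f t = 0 :=
  fun t ht => hf.eq_zero t (notMem_Icc_of_gt ht)

theorem integral_pos (hf : IsPosDensityOn a b f) : 0 < ∫ t, f t := by
  rw [integral_eq_intervalIntegral_of_forall_notMem_Icc hf.lt.le hf.eq_zero]
  exact intervalIntegral.intervalIntegral_pos_of_pos_on
    ((intervalIntegrable_iff_integrableOn_Icc_of_le hf.lt.le).2 hf.integrableOn) hf.pos hf.lt

theorem strictMonoOn_densityCDF (hf : IsPosDensityOn a b f) :
    StrictMonoOn (densityCDF f) (Icc a b) := by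
  intro x hx y hy hxy
  rw [densityCDF_eq_intervalIntegral_div hf.eq_zero_of_lt hx.1,
    densityCDF_eq_intervalIntegral_div hf.eq_zero_of_lt hy.1]
  exact div_lt_div_of_pos_right
    (strictMonoOn_primitive_of_pos_on hf.integrableOn hf.pos hx hy hxy) hf.integral_pos

theorem bijOn_densityCDF (hf : IsPosDensityOn a b f) :
    BijOn (densityCDF f) (Icc a b) (Icc 0 1) := by
  have hcont := continuousOn_densityCDF hf.lt.le hf.integrableOn hf.eq_zero_of_lt
  have hmono := hf.strictMonoOn_densityCDF
  have himage : densityCDF f '' Icc a b = Icc 0 1 := by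
    rw [hcont.image_Icc_of_monotoneOn hf.lt.le hmono.monotoneOn,
      densityCDF_left hf.eq_zero_of_lt, densityCDF_right hf.eq_zero_of_gt hf.integral_pos.ne']
  exact himage ▸ hmono.injOn.bijOn_image

theorem mapsTo_densityQuantile (hf : IsPosDensityOn a b f) :
    MapsTo (densityQuantile a b f) (Icc 0 1) (Icc a b) :=
  hf.bijOn_densityCDF.surjOn.mapsTo_invFunOn

theorem invOn_densityQuantile (hf : IsPosDensityOn a b f) :
    InvOn (densityQuantile a b f) (densityCDF f) (Icc a b) (Icc 0 1) :=
  hf.bijOn_densityCDF.invOn_invFunOn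

end IsPosDensityOn

end DensityCDF

section ConditionalDensity

variable {X : Type*} [TopologicalSpace X] {K : Set X} {a b : ℝ} {h : X → ℝ → ℝ}

theorem continuousOn_uncurry_densityCDF (hab : a ≤ b)
    (hcont : ContinuousOn (fun q : X × ℝ => h q.1 q.2) (K ×ˢ Icc a b))
    (hzero : ∀ z ∈ K, ∀ t ∉ Icc a b, h z t = 0) (hmass : ∀ z ∈ K, ∫ t, h z t ≠ 0) :
    ContinuousOn (fun q : X × ℝ => densityCDF (h q.1) q.2) (K ×ˢ Icc a b) := by
  have hprim : ContinuousOn (fun q : X × ℝ => ∫ t in a..q.2, h q.1 t) (K ×ˢ Icc a b) :=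
    continuousOn_parametric_primitive hab hcont
  have htotal : ContinuousOn (fun z => ∫ t, h z t) K :=
    (hprim.comp (f := fun z => (z, b)) (by fun_prop) fun z hz => ⟨hz, right_mem_Icc.2 hab⟩).congr
      fun z hz => integral_eq_intervalIntegral_of_forall_notMem_Icc hab (hzero z hz)
  have hquot : ContinuousOn (fun q : X × ℝ => (∫ t in a..q.2, h q.1 t) / ∫ t, h q.1 t)
      (K ×ˢ Icc a b) :=
    hprim.div (htotal.comp continuousOn_fst fun q hq => hq.1) fun q hq => hmass q.1 hq.1
  exact hquot.congr fun q hq => densityCDF_eq_intervalIntegral_div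
    (fun t ht => hzero q.1 hq.1 t (notMem_Icc_of_lt ht)) hq.2.1

theorem isPosDensityOn_of_continuousOn_prod (hab : a < b)
    (hcont : ContinuousOn (fun q : X × ℝ => h q.1 q.2) (K ×ˢ Icc a b)) {z : X} (hz : z ∈ K)
    (hpos : ∀ t ∈ Ioo a b, 0 < h z t) (hzero : ∀ t ∉ Icc a b, h z t = 0) :
    IsPosDensityOn a b (h z) where
  lt := hab
  integrableOn :=
    (hcont.comp (f := fun t => (z, t)) (by fun_prop) fun _ ht => ⟨hz, ht⟩).integrableOn_Icc
  pos := hpos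
  eq_zero := hzero

theorem continuousOn_uncurry_densityQuantile
    (hcdf : ContinuousOn (fun q : X × ℝ => densityCDF (h q.1) q.2) (K ×ˢ Icc a b))
    (hdens : ∀ z ∈ K, IsPosDensityOn a b (h z)) :
    ContinuousOn (fun q : X × ℝ => densityQuantile a b (h q.1) q.2) (K ×ˢ Icc 0 1) :=
  continuousOn_uncurry_of_strictMonoOn_of_rightInvOn (F := fun z => densityCDF (h z))
    (fun x hx => hcdf.comp (f := fun z => (z, x)) (by fun_prop) fun _ hz => ⟨hz, hx⟩)
    (fun z hz => (hdens z hz).strictMonoOn_densityCDF)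
    (fun z hz => (hdens z hz).mapsTo_densityQuantile)
    (fun z hz => (hdens z hz).invOn_densityQuantile.2)

theorem stmt1_general (hab : a < b)
    (hcont : ContinuousOn (fun q : X × ℝ => h q.1 q.2) (K ×ˢ Icc a b))
    (hpos : ∀ z ∈ K, ∀ t ∈ Ioo a b, 0 < h z t)
    (hzero : ∀ z ∈ K, ∀ t ∉ Icc a b, h z t = 0) :
    ContinuousOn (fun q : X × ℝ => densityCDF (h q.1) q.2) (K ×ˢ Icc a b) ∧
    (∀ z ∈ K, StrictMonoOn (densityCDF (h z)) (Icc a b) ∧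
      BijOn (densityCDF (h z)) (Icc a b) (Icc 0 1)) ∧
    ∃ Q : X → ℝ → ℝ,
      ContinuousOn (fun q : X × ℝ => Q q.1 q.2) (K ×ˢ Icc 0 1) ∧
      (∀ z ∈ K, MapsTo (Q z) (Icc 0 1) (Icc a b)) ∧
      (∀ z ∈ K, LeftInvOn (Q z) (densityCDF (h z)) (Icc a b)) ∧
      (∀ z ∈ K, RightInvOn (Q z) (densityCDF (h z)) (Icc 0 1)) := by
  have hdens : ∀ z ∈ K, IsPosDensityOn a b (h z) := fun z hz =>
    isPosDensityOn_of_continuousOn_prod hab hcont hz (hpos z hz) (hzero z hz)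
  have hcdf : ContinuousOn (fun q : X × ℝ => densityCDF (h q.1) q.2) (K ×ˢ Icc a b) :=
    continuousOn_uncurry_densityCDF hab.le hcont hzero fun z hz => (hdens z hz).integral_pos.ne'
  exact ⟨hcdf,
    fun z hz => ⟨(hdens z hz).strictMonoOn_densityCDF, (hdens z hz).bijOn_densityCDF⟩,
    fun z => densityQuantile a b (h z),
    continuousOn_uncurry_densityQuantile hcdf hdens,
    fun z hz => (hdens z hz).mapsTo_densityQuantile,
    fun z hz => (hdens z hz).invOn_densityQuantile.1,
    fun z hz => (hdens z hz).invOn_densityQuantile.2⟩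

end ConditionalDensity

/-- regularity of the conditional CDF.  For a function `h` on `ℝ^p × ℝ` that is
continuous and strictly positive on a compact product `K × [a,b]`, zero outside, and with
positive marginal integral `∫ h(z,t) dt` on `K`, the conditional CDF
`F(x|z) = (∫_{-∞}^x h(z,t) dt) / (∫ h(z,t) dt)` is jointly continuous on `K × [a,b]`,
strictly increasing in `x` from `[a,b]` onto `[0,1]` for each `z ∈ K`, and the conditional
quantile `Q(z,·) = F(·|z)⁻¹` is jointly continuous on `K × [0,1]`. -/
theorem stmt1 (p : ℕ) (a b : ℝ) (hab : a < b)
    (K : Set (EuclideanSpace ℝ (Fin p))) (hK : IsCompact K)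
    (h : EuclideanSpace ℝ (Fin p) → ℝ → ℝ)
    (hcont : ContinuousOn (fun q : EuclideanSpace ℝ (Fin p) × ℝ => h q.1 q.2) (K ×ˢ Icc a b))
    (hpos : ∀ z ∈ K, ∀ t ∈ Icc a b, 0 < h z t)
    (hzero : ∀ (z : EuclideanSpace ℝ (Fin p)) (t : ℝ), (z, t) ∉ K ×ˢ Icc a b → h z t = 0)
    (hint : ∀ z ∈ K, 0 < ∫ t, h z t) :
    ContinuousOn
      (fun q : EuclideanSpace ℝ (Fin p) × ℝ => (∫ t in Iic q.2, h q.1 t) / ∫ t, h q.1 t)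
      (K ×ˢ Icc a b) ∧
    (∀ z ∈ K,
      StrictMonoOn (fun x => (∫ t in Iic x, h z t) / ∫ t, h z t) (Icc a b) ∧
      BijOn (fun x => (∫ t in Iic x, h z t) / ∫ t, h z t) (Icc a b) (Icc 0 1)) ∧
    ∃ Q : EuclideanSpace ℝ (Fin p) → ℝ → ℝ,
      ContinuousOn (fun q : EuclideanSpace ℝ (Fin p) × ℝ => Q q.1 q.2) (K ×ˢ Icc 0 1) ∧
      (∀ z ∈ K, MapsTo (Q z) (Icc 0 1) (Icc a b)) ∧
      (∀ z ∈ K, ∀ x ∈ Icc a b, Q z ((∫ t in Iic x, h z t) / ∫ t, h z t) = x) ∧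
      (∀ z ∈ K, ∀ u ∈ Icc (0:ℝ) 1, (∫ t in Iic (Q z u), h z t) / (∫ t, h z t) = u) :=
  stmt1_general hab hcont (fun z hz t ht => hpos z hz t (Ioo_subset_Icc_self ht))
    fun z _ t ht => hzero z t fun hmem => ht hmem.2
end

section
/- Let X = (X_1, …, X_d) have joint probability distribution P on ℝ^d whose density h is continuous, strictly positive on a product of compact intervals K = [a_1,b_1] × ⋯ × [a_d,b_d], and zero elsewhere. Let G be a directed acyclic graph on {1,…,d} with parent sets Pa(i) ⊆ {1,…,i−1} (indices taken in a topological order of G), and suppose h factorizes along G: h(x) = ∏_{i=1}^{d} g_i(x_{Pa(i)}, x_i), where each g_i is continuous and for every fixed value z of x_{Pa(i)} in the relevant compact, t ↦ g_i(z,t) is a probability density. Then there exist continuous functions f_i : ℝ^{|Pa(i)|} × [0,1] → ℝ (f_1-type root functions being f_i : [0,1] → ℝ when Pa(i) = ∅) such that, defining G_f : [0,1]^d → ℝ^d recursively in topological order by G_f(e)_i = f_i((G_f(e)_j)_{j ∈ Pa(i)}, e_i), the pushforward of the uniform probability measure on [0,1]^d under G_f equals P. -/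
open MeasureTheory Set

/-!
Processing the variables in topological order, let `fᵢ(x, ·)` be the quantile function of the
`i`-th conditional density on `[aᵢ, bᵢ]` given the parents (the Knothe–Rosenblatt rearrangement):
it is continuous because the conditional densities are positive, and updating the coordinate `k`
by `fₖ` turns the noise law of that coordinate into its conditional law without affecting the
other coordinates.

Since `gᵢ(x, ·)` has mass one on the line, but possibly less on `[aᵢ, bᵢ]`, the `fᵢ` are built
from the `gᵢ` renormalised on `[aᵢ, bᵢ]`. Renormalising a function of mass at most one can only
increase it, so the law of the generator dominates `P`; both are probability measures, hence
they coincide.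
-/

section Clamp

variable {α : Type*} [Lattice α] {a b x : α}

/-- The retraction of a lattice onto the interval `[a, b]` (for `a ≤ b`). On `ι → ℝ` it acts
coordinatewise and is used to extend functions continuously from a box to the whole space. -/
def clamp (a b x : α) : α := a ⊔ b ⊓ x

lemma clamp_mem_Icc (hab : a ≤ b) (x : α) : clamp a b x ∈ Icc a b :=
  ⟨le_sup_left, sup_le hab inf_le_left⟩

lemma clamp_of_mem (hx : x ∈ Icc a b) : clamp a b x = x := by
  rw [clamp, inf_eq_right.2 hx.2, sup_eq_right.2 hx.1]

lemma continuous_clamp [TopologicalSpace α] [ContinuousSup α] [ContinuousInf α] (a b : α) :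
    Continuous (clamp a b) :=
  continuous_const.sup (continuous_const.inf continuous_id)

lemma continuous_clamp_pi {ι : Type*} {π : ι → Type*} [∀ i, Lattice (π i)]
    [∀ i, TopologicalSpace (π i)] [∀ i, ContinuousSup (π i)] [∀ i, ContinuousInf (π i)]
    (a b : ∀ i, π i) : Continuous (clamp a b) :=
  continuous_pi fun i => (continuous_clamp (a i) (b i)).comp (continuous_apply i)

lemma dependsOn_comp_clamp {ι β : Type*} {π : ι → Type*} [∀ i, Lattice (π i)] {a b : ∀ i, π i}
    {F : (∀ i, π i) → β} {s : Set ι} (hF : DependsOn F s) :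
    DependsOn (fun x => F (clamp a b x)) s := fun x y hxy =>
  hF fun i hi => show clamp (a i) (b i) (x i) = clamp (a i) (b i) (y i) by rw [hxy i hi]

end Clamp

section Quantile

lemma continuous_of_strictMono_of_apply_eq {X α β : Type*} [TopologicalSpace X]
    [LinearOrder α] [TopologicalSpace α] [OrderTopology α]
    [LinearOrder β] [TopologicalSpace β] [OrderClosedTopology β]
    {F : X → α → β} {c : X → β} {q : X → α} (hF : ∀ t, Continuous fun x => F x t)
    (hmono : ∀ x, StrictMono (F x)) (hc : Continuous c) (hq : ∀ x, F x (q x) = c x) :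
    Continuous q := by
  refine OrderTopology.continuous_iff.2 fun t => ⟨?_, ?_⟩
  · have : q ⁻¹' Ioi t = {x | F x t < c x} := by
      ext x
      rw [mem_preimage, mem_Ioi, mem_ofPred_eq, ← hq, (hmono x).lt_iff_lt]
    exact this ▸ isOpen_lt (hF t) hc
  · have : q ⁻¹' Iio t = {x | c x < F x t} := by
      ext x
      rw [mem_preimage, mem_Iio, mem_ofPred_eq, ← hq, (hmono x).lt_iff_lt]
    exact this ▸ isOpen_lt hc (hF t)

lemma map_restrict_image_of_leftInvOn {F F' q : ℝ → ℝ} {s : Set ℝ} (hs : MeasurableSet s)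
    (hF : ∀ t ∈ s, HasDerivWithinAt F (F' t) s t) (hq : Measurable q) (hqF : LeftInvOn q F s) :
    (volume.restrict (F '' s)).map q =
      (volume.restrict s).withDensity fun t => ENNReal.ofReal |F' t| := by
  ext A hA
  rw [Measure.map_apply hq hA, withDensity_apply _ hA, ← lintegral_indicator_one (hq hA),
    lintegral_image_eq_lintegral_abs_deriv_mul hs hF hqF.injOn, ← lintegral_indicator hA]
  refine setLIntegral_congr_fun hs fun t ht => ?_
  by_cases htA : t ∈ A <;> simp [indicator, hqF ht, htA]

/-- The quantile function of the density `ρ` on `[a, b]`, i.e. the inverse of the cumulative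
distribution function `t ↦ ∫ s in a..t, ρ s` restricted to `[a, b]`. It is extended to the line
by clamping its argument to `[0, 1]`. -/
noncomputable def quantile (a b : ℝ) (ρ : ℝ → ℝ) (e : ℝ) : ℝ :=
  Function.invFunOn (fun t => ∫ s in a..t, ρ s) (Icc a b) (clamp 0 1 e)

variable {a b : ℝ} {ρ : ℝ → ℝ}

lemma strictMono_integral_of_pos (hρ : Continuous ρ) (hpos : ∀ t, 0 < ρ t) (a : ℝ) :
    StrictMono fun t => ∫ s in a..t, ρ s :=
  strictMono_of_hasDerivAt_pos (fun t => (hρ.integral_hasStrictDerivAt a t).hasDerivAt) hpos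

lemma image_integral_Icc (hab : a ≤ b) (hρ : Continuous ρ) (hpos : ∀ t, 0 < ρ t)
    (hmass : ∫ s in a..b, ρ s = 1) : (fun t => ∫ s in a..t, ρ s) '' Icc a b = Icc 0 1 := by
  have hcont : ContinuousOn (fun t => ∫ s in a..t, ρ s) (Icc a b) :=
    (intervalIntegral.continuous_primitive (fun _ _ => hρ.intervalIntegrable _ _) a).continuousOn
  have hleft : ∫ s in a..a, ρ s = 0 := intervalIntegral.integral_same
  have hmono := (strictMono_integral_of_pos hρ hpos a).monotone.monotoneOn (Icc a b)
  simpa only [hleft, hmass] using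
    hmono.image_Icc_subset.antisymm (intermediate_value_Icc hab hcont)

lemma integral_quantile (hab : a ≤ b) (hρ : Continuous ρ) (hpos : ∀ t, 0 < ρ t)
    (hmass : ∫ s in a..b, ρ s = 1) (e : ℝ) :
    ∫ s in a..quantile a b ρ e, ρ s = clamp 0 1 e :=
  Function.invFunOn_eq (f := fun t => ∫ s in a..t, ρ s) <|
    (image_integral_Icc hab hρ hpos hmass).ge (clamp_mem_Icc zero_le_one e)

lemma leftInvOn_quantile_integral (hab : a ≤ b) (hρ : Continuous ρ) (hpos : ∀ t, 0 < ρ t)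
    (hmass : ∫ s in a..b, ρ s = 1) :
    LeftInvOn (quantile a b ρ) (fun t => ∫ s in a..t, ρ s) (Icc a b) := by
  intro t ht
  have hmem := (image_integral_Icc hab hρ hpos hmass).le (mem_image_of_mem _ ht)
  apply (strictMono_integral_of_pos hρ hpos a).injective
  exact (integral_quantile hab hρ hpos hmass _).trans (clamp_of_mem hmem)

lemma continuous_quantile {X : Type*} [TopologicalSpace X] [FirstCountableTopology X]
    {ρ : X → ℝ → ℝ} (hab : a ≤ b) (hρ : Continuous fun p : X × ℝ => ρ p.1 p.2)
    (hpos : ∀ x t, 0 < ρ x t) (hmass : ∀ x, ∫ s in a..b, ρ x s = 1) :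
    Continuous fun p : X × ℝ => quantile a b (ρ p.1) p.2 := by
  have hρx (x : X) : Continuous (ρ x) := hρ.comp (Continuous.prodMk_right x)
  have hclamp : Continuous fun p : X × ℝ => clamp (0 : ℝ) 1 p.2 :=
    (continuous_clamp 0 1).comp continuous_snd
  refine continuous_of_strictMono_of_apply_eq (F := fun p t => ∫ s in a..t, ρ p.1 s)
    (c := fun p => clamp 0 1 p.2) (fun t => ?_)
    (fun p => strictMono_integral_of_pos (hρx p.1) (hpos p.1) a)
    hclamp (fun p => integral_quantile hab (hρx p.1) (hpos p.1) (hmass p.1) p.2)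
  exact (intervalIntegral.continuous_parametric_intervalIntegral_of_continuous' hρ a t).comp
    continuous_fst

lemma map_quantile (hab : a ≤ b) (hρ : Continuous ρ) (hpos : ∀ t, 0 < ρ t)
    (hmass : ∫ s in a..b, ρ s = 1) :
    (volume.restrict (Icc 0 1)).map (quantile a b ρ) =
      (volume.restrict (Icc a b)).withDensity fun t => ENNReal.ofReal (ρ t) := by
  have hcont : Continuous fun p : Unit × ℝ => quantile a b ρ p.2 :=
    continuous_quantile hab (hρ.comp continuous_snd) (fun _ => hpos) (fun _ => hmass)
  have hq : Measurable (quantile a b ρ) := (hcont.comp (Continuous.prodMk_right ())).measurable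
  rw [← image_integral_Icc hab hρ hpos hmass, map_restrict_image_of_leftInvOn measurableSet_Icc
    (fun t _ => (hρ.integral_hasStrictDerivAt a t).hasDerivAt.hasDerivWithinAt) hq
    (leftInvOn_quantile_integral hab hρ hpos hmass)]
  simp only [abs_of_pos (hpos _)]

end Quantile

section Normalization

/-- The function `γ` on `[a, b]` divided by its mass there, extended to the line by its values at
the endpoints; the extension makes it continuous and positive everywhere when `γ` is so on
`[a, b]`. -/
noncomputable def normalizedExtension (a b : ℝ) (γ : ℝ → ℝ) (t : ℝ) : ℝ :=
  γ (clamp a b t) / ∫ s in a..b, γ s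

variable {a b : ℝ} {γ : ℝ → ℝ}

lemma integral_comp_clamp (hab : a ≤ b) (γ : ℝ → ℝ) :
    ∫ s in a..b, γ (clamp a b s) = ∫ s in a..b, γ s :=
  intervalIntegral.integral_congr fun s hs =>
    congrArg γ (clamp_of_mem (by rwa [uIcc_of_le hab] at hs))

lemma integral_pos_of_continuousOn_of_pos (hab : a < b) (hγ : ContinuousOn γ (Icc a b))
    (hpos : ∀ t ∈ Icc a b, 0 < γ t) : 0 < ∫ s in a..b, γ s :=
  intervalIntegral.intervalIntegral_pos_of_pos_on (hγ.intervalIntegrable_of_Icc hab.le)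
    (fun t ht => hpos t (Ioo_subset_Icc_self ht)) hab

lemma normalizedExtension_pos (hab : a ≤ b) (hmass : 0 < ∫ s in a..b, γ s)
    (hpos : ∀ t ∈ Icc a b, 0 < γ t) (t : ℝ) : 0 < normalizedExtension a b γ t :=
  div_pos (hpos _ (clamp_mem_Icc hab t)) hmass

lemma integral_normalizedExtension (hab : a ≤ b) (hmass : ∫ s in a..b, γ s ≠ 0) :
    ∫ s in a..b, normalizedExtension a b γ s = 1 := by
  simp only [normalizedExtension]
  rw [intervalIntegral.integral_div, integral_comp_clamp hab, div_self hmass]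

lemma le_normalizedExtension {t : ℝ} (ht : t ∈ Icc a b) (hγt : 0 ≤ γ t)
    (hmass_pos : 0 < ∫ s in a..b, γ s) (hmass_le : ∫ s in a..b, γ s ≤ 1) :
    γ t ≤ normalizedExtension a b γ t := by
  rw [normalizedExtension, clamp_of_mem ht]
  exact le_div_self hγt hmass_pos hmass_le

lemma continuous_normalizedExtension {X : Type*} [TopologicalSpace X] [FirstCountableTopology X]
    {γ : X → ℝ → ℝ} (hab : a ≤ b)
    (hγ : ContinuousOn (fun p : X × ℝ => γ p.1 p.2) (univ ×ˢ Icc a b))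
    (hmass : ∀ x, ∫ s in a..b, γ x s ≠ 0) :
    Continuous fun p : X × ℝ => normalizedExtension a b (γ p.1) p.2 := by
  have hext : Continuous fun p : X × ℝ => γ p.1 (clamp a b p.2) :=
    hγ.comp_continuous (f := fun p : X × ℝ => (p.1, clamp a b p.2))
      (continuous_fst.prodMk ((continuous_clamp a b).comp continuous_snd))
      fun p => ⟨mem_univ _, clamp_mem_Icc hab _⟩
  have hint : Continuous fun x => ∫ s in a..b, γ x s := by
    simpa only [integral_comp_clamp hab] using
      intervalIntegral.continuous_parametric_intervalIntegral_of_continuous'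
        (f := fun x t => γ x (clamp a b t)) (μ := volume) hext a b
  exact hext.div (hint.comp continuous_fst) fun p => hmass p.1

lemma intervalIntegral_le_one_of_integral_eq_one (hab : a ≤ b) (hnonneg : ∀ t, 0 ≤ γ t)
    (hmass : ∫ s, γ s = 1) : ∫ s in a..b, γ s ≤ 1 := by
  have hint : Integrable γ := .of_integral_ne_zero (hmass.trans_ne one_ne_zero)
  rw [intervalIntegral.integral_of_le hab, ← hmass]
  exact setIntegral_le_integral hint (Filter.Eventually.of_forall hnonneg)

end Normalization

section Triangular

variable {ι : Type*} {X : ι → Type*}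

lemma dependsOn_apply_update [DecidableEq ι] {β : Type*} {F : (∀ i, X i) → β} {s : Set ι} {k : ι}
    (hF : DependsOn F s) (hk : k ∉ s) (x : ∀ i, X i) (t : X k) :
    F (Function.update x k t) = F x :=
  hF fun _ hi => Function.update_of_ne (ne_of_mem_of_not_mem hi hk) _ _

lemma measurable_update_apply [DecidableEq ι] [∀ i, MeasurableSpace (X i)] {k : ι}
    {f : (∀ i, X i) → X k → X k}
    (hf : Measurable fun p : (∀ i, X i) × X k => f p.1 p.2) :
    Measurable fun z : ∀ i, X i => Function.update z k (f z (z k)) :=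
  measurable_update'.comp
    (measurable_id.prodMk (hf.comp (measurable_id.prodMk (measurable_pi_apply k))))

variable [Fintype ι]

lemma factor_ne_zero_of_prod_ne_zero {M : Type*} [CommMonoidWithZero M]
    {s : ∀ i, Set (X i)} {g : ∀ i, (∀ j, X j) → X i → M} (hdep : ∀ i, DependsOn (g i) {i}ᶜ)
    (hprod : ∀ x ∈ univ.pi s, ∏ i, g i x (x i) ≠ 0) {x : ∀ i, X i} (hx : x ∈ univ.pi s) {i : ι}
    {t : X i} (ht : t ∈ s i) : g i x t ≠ 0 := by
  classical
  intro h_zero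
  refine hprod (Function.update x i t) ((update_mem_pi_iff_of_mem hx).2 fun _ => ht)
    (Finset.prod_eq_zero (Finset.mem_univ i) ?_)
  rw [dependsOn_apply_update (hdep i) (notMem_compl_iff.2 rfl), Function.update_self, h_zero]

variable [∀ i, MeasurableSpace (X i)] {μ ν : ∀ i, Measure (X i)}
  [∀ i, SigmaFinite (μ i)] [∀ i, SigmaFinite (ν i)]

lemma lintegral_pi_eq_of_lintegral_update_eq [DecidableEq ι] {k : ι}
    (hμν : ∀ i ≠ k, μ i = ν i) {φ ψ : (∀ i, X i) → ENNReal} (hφ : Measurable φ)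
    (hψ : Measurable ψ)
    (h : ∀ z, ∫⁻ t, φ (Function.update z k t) ∂μ k = ∫⁻ t, ψ (Function.update z k t) ∂ν k) :
    ∫⁻ z, φ z ∂Measure.pi μ = ∫⁻ z, ψ z ∂Measure.pi ν := by
  rcases isEmpty_or_nonempty (∀ i, X i) with _ | ⟨⟨z⟩⟩
  · simp only [lintegral_of_isEmpty]
  have hrest : (fun i : Finset.univ.erase k => μ i) = fun i : Finset.univ.erase k => ν i :=
    funext fun i => hμν i (Finset.ne_of_mem_erase i.2)
  rw [lintegral_eq_lmarginal_univ z, lintegral_eq_lmarginal_univ z,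
    lmarginal_erase' _ hφ (Finset.mem_univ k), lmarginal_erase' _ hψ (Finset.mem_univ k),
    funext h]
  simp only [lmarginal, hrest]

lemma map_update_withDensity_pi [DecidableEq ι] {k : ι} (hμν : ∀ i ≠ k, μ i = ν i)
    {A : (∀ i, X i) → ENNReal} (hA : Measurable A) (hAdep : DependsOn A {k}ᶜ)
    {f : (∀ i, X i) → X k → X k} (hf : Measurable fun p : (∀ i, X i) × X k => f p.1 p.2)
    (hfdep : DependsOn f {k}ᶜ)
    {w : (∀ i, X i) → X k → ENNReal} (hw : Measurable fun p : (∀ i, X i) × X k => w p.1 p.2)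
    (hwdep : DependsOn w {k}ᶜ) (hfw : ∀ z, (μ k).map (f z) = (ν k).withDensity (w z)) :
    ((Measure.pi μ).withDensity A).map (fun z => Function.update z k (f z (z k))) =
      (Measure.pi ν).withDensity fun z => A z * w z (z k) := by
  have hT := measurable_update_apply hf
  have hwk : Measurable fun z : ∀ i, X i => w z (z k) :=
    hw.comp (measurable_id.prodMk (measurable_pi_apply k))
  refine Measure.ext_of_lintegral _ fun φ hφ => ?_
  rw [lintegral_map hφ hT, lintegral_withDensity_eq_lintegral_mul _ hA
      (g := fun z => φ (Function.update z k (f z (z k)))) (hφ.comp hT),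
    lintegral_withDensity_eq_lintegral_mul (Measure.pi ν) (f := fun z => A z * w z (z k))
      (hA.mul hwk) hφ]
  refine lintegral_pi_eq_of_lintegral_update_eq hμν (hA.mul (hφ.comp hT))
    ((hA.mul hwk).mul hφ) fun z => ?_
  have hk : k ∉ ({k}ᶜ : Set ι) := notMem_compl_iff.2 rfl
  have hφz : Measurable fun t => φ (Function.update z k t) := hφ.comp (measurable_update z)
  have hfz : Measurable (f z) := hf.comp measurable_prodMk_left
  have hwz : Measurable (w z) := hw.comp measurable_prodMk_left
  simp only [Pi.mul_apply, dependsOn_apply_update hAdep hk,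
    dependsOn_apply_update hfdep hk, dependsOn_apply_update hwdep hk, Function.update_self,
    Function.update_idem, mul_assoc]
  rw [lintegral_const_mul (f := fun t => φ (Function.update z k (f z t))) _ (hφz.comp hfz),
    lintegral_const_mul (f := fun t => w z t * φ (Function.update z k t)) _ (hwz.mul hφz),
    ← lintegral_map (f := fun t => φ (Function.update z k t)) hφz hfz, hfw,
    lintegral_withDensity_eq_lintegral_mul _ hwz hφz]
  rfl

variable [LinearOrder ι] {f : ∀ i, (∀ j, X j) → X i → X i}
  {w : ∀ i, (∀ j, X j) → X i → ENNReal}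

lemma map_update_pi_piecewise {s : Finset ι} {k : ι} (hlt : ∀ i ∈ s, i < k)
    (hf : Measurable fun p : (∀ j, X j) × X k => f k p.1 p.2) (hfdep : DependsOn (f k) (Iio k))
    (hw : ∀ i, Measurable fun p : (∀ j, X j) × X i => w i p.1 p.2)
    (hwdep : ∀ i, DependsOn (w i) (Iio i))
    (hfw : ∀ z, (μ k).map (f k z) = (ν k).withDensity (w k z)) :
    ((Measure.pi (s.piecewise ν μ)).withDensity fun z => ∏ i ∈ s, w i z (z i)).map
        (fun z => Function.update z k (f k z (z k))) =
      (Measure.pi ((insert k s).piecewise ν μ)).withDensity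
        fun z => ∏ i ∈ insert k s, w i z (z i) := by
  have hks : k ∉ s := fun hk => (hlt k hk).false
  have hsub {i : ι} (hik : i ≤ k) : Iio i ⊆ {k}ᶜ := fun j hj => (hj.trans_le hik).ne
  have hsigma (t : Finset ι) (i : ι) : SigmaFinite (t.piecewise ν μ i) := by
    by_cases hi : i ∈ t <;> simp only [hi, Finset.piecewise_eq_of_mem,
      Finset.piecewise_eq_of_notMem, not_false_eq_true] <;> infer_instance
  have hagree : ∀ i ≠ k, s.piecewise ν μ i = (insert k s).piecewise ν μ i := fun i hik =>
    (s.piecewise_insert_of_ne ν μ hik).symm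
  have hdensity : Measurable fun z : ∀ i, X i => ∏ i ∈ s, w i z (z i) :=
    Finset.measurable_fun_prod s fun i _ =>
      (hw i).comp (measurable_id.prodMk (measurable_pi_apply i))
  have hdensity_dep : DependsOn (fun z : ∀ i, X i => ∏ i ∈ s, w i z (z i)) {k}ᶜ :=
    fun x y hxy => Finset.prod_congr rfl fun i hi => by
      rw [(hwdep i).mono (hsub (hlt i hi).le) hxy, hxy i (hlt i hi).ne]
  rw [map_update_withDensity_pi hagree hdensity hdensity_dep hf (hfdep.mono (hsub le_rfl)) (hw k)
    ((hwdep k).mono (hsub le_rfl)) (by simpa [hks] using hfw)]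
  simp only [Finset.prod_insert hks, mul_comm]

lemma exists_map_pi_eq_withDensity_piecewise
    (hf : ∀ i, Measurable fun p : (∀ j, X j) × X i => f i p.1 p.2)
    (hfdep : ∀ i, DependsOn (f i) (Iio i))
    (hw : ∀ i, Measurable fun p : (∀ j, X j) × X i => w i p.1 p.2)
    (hwdep : ∀ i, DependsOn (w i) (Iio i))
    (hfw : ∀ i z, (μ i).map (f i z) = (ν i).withDensity (w i z)) (s : Finset ι) :
    ∃ H : (∀ i, X i) → ∀ i, X i, Measurable H ∧ (∀ e, ∀ i ∈ s, H e i = f i (H e) (e i)) ∧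
      (∀ e, ∀ i ∉ s, H e i = e i) ∧
      (Measure.pi μ).map H =
        (Measure.pi (s.piecewise ν μ)).withDensity fun z => ∏ i ∈ s, w i z (z i) := by
  induction s using Finset.induction_on_max with
  | empty => exact ⟨id, measurable_id, by simp, by simp, by simp⟩
  | insert k s hlt ih =>
    obtain ⟨H, hH, hHs, hHnot, hmap⟩ := ih
    have hT := measurable_update_apply (hf k)
    have hupd {i : ι} (hik : i ≤ k) (z : ∀ i, X i) (t : X k) :
        f i (Function.update z k t) = f i z :=
      dependsOn_apply_update (hfdep i) (notMem_Iio.2 hik) z t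
    refine ⟨(fun z => Function.update z k (f k z (z k))) ∘ H, hT.comp hH,
      fun e i hi => ?_, fun e i hi => ?_, ?_⟩
    · rw [Function.comp_apply]
      rcases Finset.mem_insert.1 hi with rfl | his
      · rw [hupd le_rfl, Function.update_self, hHnot e i fun hi => (hlt i hi).false]
      · rw [hupd (hlt i his).le, Function.update_of_ne (hlt i his).ne, hHs e i his]
    · obtain ⟨hik, his⟩ := not_or.1 (mt Finset.mem_insert.2 hi)
      rw [Function.comp_apply, Function.update_of_ne hik, hHnot e i his]
    · rw [← Measure.map_map hT hH, hmap,
        map_update_pi_piecewise hlt (hf k) (hfdep k) hw hwdep (hfw k)]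

lemma exists_map_pi_eq_withDensity_prod
    (hf : ∀ i, Measurable fun p : (∀ j, X j) × X i => f i p.1 p.2)
    (hfdep : ∀ i, DependsOn (f i) (Iio i))
    (hw : ∀ i, Measurable fun p : (∀ j, X j) × X i => w i p.1 p.2)
    (hwdep : ∀ i, DependsOn (w i) (Iio i))
    (hfw : ∀ i z, (μ i).map (f i z) = (ν i).withDensity (w i z)) :
    ∃ G : (∀ i, X i) → ∀ i, X i, Measurable G ∧ (∀ e i, G e i = f i (G e) (e i)) ∧
      (Measure.pi μ).map G = (Measure.pi ν).withDensity fun z => ∏ i, w i z (z i) := by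
  obtain ⟨G, hG, hGf, -, hmap⟩ :=
    exists_map_pi_eq_withDensity_piecewise hf hfdep hw hwdep hfw Finset.univ
  exact ⟨G, hG, fun e i => hGf e i (Finset.mem_univ i), by rwa [Finset.piecewise_univ] at hmap⟩

end Triangular

section BoxDensity

variable {ι : Type*} {a b : ι → ℝ} {i : ι} {γ : (ι → ℝ) → ℝ → ℝ} {x : ι → ℝ}

/-- The conditional density of the coordinate `i` on the box `[a, b]`, obtained by normalising
`γ x` on `[a i, b i]`. Clamping `x` to the box extends it to the whole space. -/
noncomputable def boxDensity (a b : ι → ℝ) (i : ι) (γ : (ι → ℝ) → ℝ → ℝ) (x : ι → ℝ) : ℝ → ℝ :=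
  normalizedExtension (a i) (b i) (γ (clamp a b x))

lemma dependsOn_boxDensity {s : Set ι} (hγ : DependsOn γ s) : DependsOn (boxDensity a b i γ) s :=
  fun _ _ hxy => congrArg (normalizedExtension (a i) (b i)) (dependsOn_comp_clamp hγ hxy)

lemma integral_boxDensity (hab : a ≤ b)
    (hmass : ∀ x ∈ Icc a b, ∫ s in a i..b i, γ x s ≠ 0) (x : ι → ℝ) :
    ∫ s in a i..b i, boxDensity a b i γ x s = 1 :=
  integral_normalizedExtension (hab i) (hmass _ (clamp_mem_Icc hab x))

lemma boxDensity_pos (hab : a ≤ b) (hmass : ∀ x ∈ Icc a b, 0 < ∫ s in a i..b i, γ x s)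
    (hpos : ∀ x ∈ Icc a b, ∀ t ∈ Icc (a i) (b i), 0 < γ x t) (x : ι → ℝ) (t : ℝ) :
    0 < boxDensity a b i γ x t :=
  normalizedExtension_pos (hab i) (hmass _ (clamp_mem_Icc hab x))
    (hpos _ (clamp_mem_Icc hab x)) t

lemma continuous_boxDensity [Countable ι] (hab : a ≤ b)
    (hγ : ContinuousOn (fun p : (ι → ℝ) × ℝ => γ p.1 p.2) (Icc a b ×ˢ Icc (a i) (b i)))
    (hmass : ∀ x ∈ Icc a b, ∫ s in a i..b i, γ x s ≠ 0) :
    Continuous fun p : (ι → ℝ) × ℝ => boxDensity a b i γ p.1 p.2 := by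
  have hclamp : Continuous fun p : (ι → ℝ) × ℝ => (clamp a b p.1, p.2) :=
    ((continuous_clamp_pi a b).comp continuous_fst).prodMk continuous_snd
  exact continuous_normalizedExtension (γ := fun x => γ (clamp a b x)) (hab i)
    (hγ.comp hclamp.continuousOn fun p hp => ⟨clamp_mem_Icc hab p.1, hp.2⟩)
    fun x => hmass _ (clamp_mem_Icc hab x)

lemma le_boxDensity (hx : x ∈ Icc a b) (hγx : 0 ≤ γ x (x i))
    (hmass_pos : 0 < ∫ s in a i..b i, γ x s) (hmass_le : ∫ s in a i..b i, γ x s ≤ 1) :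
    γ x (x i) ≤ boxDensity a b i γ x (x i) := by
  rw [boxDensity, clamp_of_mem hx]
  exact le_normalizedExtension ⟨hx.1 i, hx.2 i⟩ hγx hmass_pos hmass_le

lemma withDensity_prod_le_withDensity_boxDensity [Fintype ι] {g : ι → (ι → ℝ) → ℝ → ℝ}
    (μ : Measure (ι → ℝ)) (hnonneg : ∀ i, ∀ x ∈ Icc a b, ∀ t, 0 ≤ g i x t)
    (hmass_pos : ∀ i, ∀ x ∈ Icc a b, 0 < ∫ s in a i..b i, g i x s)
    (hmass_le : ∀ i, ∀ x ∈ Icc a b, ∫ s in a i..b i, g i x s ≤ 1) :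
    (μ.restrict (Icc a b)).withDensity (fun x => ENNReal.ofReal (∏ i, g i x (x i))) ≤
      (μ.restrict (Icc a b)).withDensity
        fun x => ∏ i, ENNReal.ofReal (boxDensity a b i (g i) x (x i)) := by
  refine withDensity_mono (ae_restrict_of_forall_mem measurableSet_Icc fun x hx => ?_)
  calc ENNReal.ofReal (∏ i, g i x (x i))
      = ∏ i, ENNReal.ofReal (g i x (x i)) :=
        ENNReal.ofReal_prod_of_nonneg fun i _ => hnonneg i x hx _
    _ ≤ ∏ i, ENNReal.ofReal (boxDensity a b i (g i) x (x i)) :=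
        Finset.prod_le_prod' fun i _ => ENNReal.ofReal_le_ofReal <|
          le_boxDensity hx (hnonneg i x hx _) (hmass_pos i x hx) (hmass_le i x hx)

end BoxDensity

lemma exists_map_uniform_eq_withDensity_prod {ι : Type*} [Fintype ι] [LinearOrder ι]
    {a b : ι → ℝ} (hab : a ≤ b) {ρ : ι → (ι → ℝ) → ℝ → ℝ}
    (hρ : ∀ i, Continuous fun p : (ι → ℝ) × ℝ => ρ i p.1 p.2)
    (hdep : ∀ i, DependsOn (ρ i) (Iio i)) (hpos : ∀ i x t, 0 < ρ i x t)
    (hmass : ∀ i x, ∫ s in a i..b i, ρ i x s = 1) :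
    ∃ G : (ι → ℝ) → ι → ℝ, Measurable G ∧
      (∀ e i, G e i = quantile (a i) (b i) (ρ i (G e)) (e i)) ∧
      (volume.restrict (univ.pi fun _ => Icc 0 1)).map G =
        (volume.restrict (Icc a b)).withDensity
          fun x => ∏ i, ENNReal.ofReal (ρ i x (x i)) := by
  simp only [← pi_univ_Icc a b, volume_pi, Measure.restrict_pi_pi]
  refine exists_map_pi_eq_withDensity_prod (f := fun i x => quantile (a i) (b i) (ρ i x))
    (w := fun i x t => ENNReal.ofReal (ρ i x t))
    (fun i => (continuous_quantile (hab i) (hρ i) (hpos i) (hmass i)).measurable)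
    (fun i x y hxy => ?_) (fun i => (hρ i).measurable.ennreal_ofReal) (fun i x y hxy => ?_)
    (fun i x => map_quantile (hab i) ?_ (hpos i x) (hmass i x))
  · simp only [hdep i hxy]
  · simp only [hdep i hxy]
  · exact (hρ i).comp (Continuous.prodMk_right x)

lemma map_uniform_eq_of_le {ι α : Type*} [Fintype ι] [MeasurableSpace α] {P : Measure α}
    [IsProbabilityMeasure P] {G : (ι → ℝ) → α} (hG : Measurable G)
    (hP : P ≤ (volume.restrict (univ.pi fun _ => Icc 0 1)).map G) :
    (volume.restrict (univ.pi fun _ => Icc 0 1)).map G = P := by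
  have : IsProbabilityMeasure (volume.restrict (univ.pi fun _ : ι => Icc (0 : ℝ) 1)) :=
    ⟨by simp [Real.volume_Icc_pi]⟩
  have := Measure.isProbabilityMeasure_map (μ := volume.restrict (univ.pi fun _ => Icc 0 1))
    hG.aemeasurable
  exact (Measure.eq_of_le_of_isProbabilityMeasure hP).symm

lemma withDensity_eq_restrict_withDensity {α : Type*} [MeasurableSpace α] (μ : Measure α)
    {s : Set α} (hs : MeasurableSet s) {f : α → ENNReal} (hf : ∀ x ∉ s, f x = 0) :
    μ.withDensity f = (μ.restrict s).withDensity f := by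
  rw [← withDensity_indicator hs, indicator_eq_self.2 (Function.support_subset_iff'.2 hf)]

/-- Proposition 1 of the paper: representing joint distributions with FCMs.
If the joint density `h` of `P` on `ℝ^d` is continuous and strictly positive on a compact box
`K = ∏ [aᵢ,bᵢ]` and zero elsewhere, and factorizes along a DAG with parent sets `Pa i ⊆ {j < i}`
as `h x = ∏ᵢ gᵢ(x_{Pa i}, xᵢ)` where each `gᵢ` is continuous and a conditional probability
density, then there are continuous causal mechanisms `fᵢ` (depending only on the parent
coordinates and one noise coordinate) whose recursively defined generator `G`
(`G e i = fᵢ((G e)_{Pa i}, eᵢ)`) pushes the uniform measure on `[0,1]^d` forward to `P`. -/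
theorem stmt3 (d : ℕ) (a b : Fin d → ℝ) (hab : ∀ i, a i < b i)
    (h : (Fin d → ℝ) → ℝ)
    (K : Set (Fin d → ℝ)) (hKdef : K = Set.univ.pi fun i => Icc (a i) (b i))
    (hcont : ContinuousOn h K)
    (hpos : ∀ x ∈ K, 0 < h x)
    (hzero : ∀ x ∉ K, h x = 0)
    (P : Measure (Fin d → ℝ)) [IsProbabilityMeasure P]
    (hP : P = volume.withDensity fun x => ENNReal.ofReal (h x))
    (Pa : Fin d → Finset (Fin d)) (hPa : ∀ i, ∀ j ∈ Pa i, j < i)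
    (g : Fin d → (Fin d → ℝ) → ℝ → ℝ)
    (hgdep : ∀ i, ∀ x y : Fin d → ℝ, (∀ j ∈ Pa i, x j = y j) → g i x = g i y)
    (hgcont : ∀ i, ContinuousOn (fun q : (Fin d → ℝ) × ℝ => g i q.1 q.2) (K ×ˢ Icc (a i) (b i)))
    (hgnonneg : ∀ i, ∀ x ∈ K, ∀ t : ℝ, 0 ≤ g i x t)
    (hgdens : ∀ i, ∀ x ∈ K, ∫ t, g i x t = 1)
    (hfact : ∀ x, h x = ∏ i, g i x (x i)) :
    ∃ f : Fin d → (Fin d → ℝ) → ℝ → ℝ,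
      (∀ i, Continuous fun q : (Fin d → ℝ) × ℝ => f i q.1 q.2) ∧
      (∀ i, ∀ x y : Fin d → ℝ, (∀ j ∈ Pa i, x j = y j) → f i x = f i y) ∧
      ∃ G : (Fin d → ℝ) → Fin d → ℝ,
        Measurable G ∧
        (∀ e i, G e i = f i (G e) (e i)) ∧
        Measure.map G (volume.restrict (Set.univ.pi fun _ : Fin d => Icc (0:ℝ) 1)) = P := by
  obtain rfl : K = Icc a b := hKdef.trans (pi_univ_Icc a b)
  have hab' : a ≤ b := fun i => (hab i).le
  have hgpos (i) (x) (hx : x ∈ Icc a b) (t) (ht : t ∈ Icc (a i) (b i)) : 0 < g i x t :=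
    (hgnonneg i x hx t).lt_of_ne' <| factor_ne_zero_of_prod_ne_zero
      (fun i x y hxy => hgdep i x y fun j hj => hxy j (hPa i j hj).ne)
      (fun x hx => hfact x ▸ (hpos x (hKdef.ge hx)).ne') (hKdef.le hx) ht
  have hmass_pos (i) (x) (hx : x ∈ Icc a b) : 0 < ∫ s in a i..b i, g i x s :=
    integral_pos_of_continuousOn_of_pos (hab i)
      ((hgcont i).comp (Continuous.prodMk_right x).continuousOn fun t ht => ⟨hx, ht⟩)
      (hgpos i x hx)
  have hmass_le (i) (x) (hx : x ∈ Icc a b) : ∫ s in a i..b i, g i x s ≤ 1 :=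
    intervalIntegral_le_one_of_integral_eq_one (hab i).le (hgnonneg i x hx) (hgdens i x hx)
  have hmass_ne (i) (x) (hx : x ∈ Icc a b) := (hmass_pos i x hx).ne'
  have hρcont (i) := continuous_boxDensity hab' (hgcont i) (hmass_ne i)
  have hρpos (i) := boxDensity_pos hab' (hmass_pos i) (hgpos i)
  have hρmass (i) := integral_boxDensity hab' (hmass_ne i)
  have hρdep (i) : DependsOn (boxDensity a b i (g i)) (Pa i) := dependsOn_boxDensity (hgdep i)
  obtain ⟨G, hG, hGf, hmap⟩ := exists_map_uniform_eq_withDensity_prod hab' hρcont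
    (fun i => (hρdep i).mono (hPa i)) hρpos hρmass
  refine ⟨fun i x => quantile (a i) (b i) (boxDensity a b i (g i) x),
    fun i => continuous_quantile (hab i).le (hρcont i) (hρpos i) (hρmass i),
    fun i x y hxy => congrArg _ (hρdep i hxy), G, hG, hGf, map_uniform_eq_of_le hG ?_⟩
  rw [hmap, hP, withDensity_eq_restrict_withDensity volume measurableSet_Icc
    fun x hx => by rw [hzero x hx, ENNReal.ofReal_zero], funext hfact]
  exact withDensity_prod_le_withDensity_boxDensity (g := g) volume hgnonneg hmass_pos hmass_le
end

section
/- Let G be a directed acyclic graph on {1,…,d} with parent sets Pa(i) ⊆ {1,…,i−1} (indices in a topological order of G), and let f_i : ℝ^{|Pa(i)|} × [0,1] → ℝ be continuous functions. Define the generator G_f : [0,1]^d → ℝ^d recursively in topological order by G_f(e)_i = f_i((G_f(e)_j)_{j ∈ Pa(i)}, e_i). Fix ε_0 > 0 and let C_i ⊂ ℝ^{|Pa(i)|} be compact sets containing the closed ε_0-neighborhood of the range of e ↦ (G_f(e)_j)_{j ∈ Pa(i)}. Then for every ε ∈ (0, ε_0] there exists η > 0 such that for all continuous functions f̂_i : ℝ^{|Pa(i)|}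 × [0,1] → ℝ satisfying sup_{(u,e) ∈ C_i × [0,1]} |f̂_i(u,e) − f_i(u,e)| < η for every i, the generator G_{f̂} defined recursively from the f̂_i satisfies sup_{e ∈ [0,1]^d} ‖G_f(e) − G_{f̂}(e)‖ < ε. -/
open Set

/-!
Uniform convergence of mechanisms passes to generators one node at a time, in topological order:
once the parents of a node converge uniformly, their values eventually stay in the set on which the
mechanisms converge uniformly, and the uniform continuity of the limit mechanism there lets one
pass to the limit in the composition. The `ε`-`η` form follows by applying this to a sequence of
counterexamples with `η = 1 / (n + 1)`.
-/

open Filter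

section UniformConvergence

variable {ι α β γ : Type*} {l : Filter ι} {s : Set α}

theorem tendstoUniformlyOn_pi {κ : Type*} {X : κ → Type*} [∀ k, UniformSpace (X k)]
    {F : ι → α → ∀ k, X k} {f : α → ∀ k, X k} :
    TendstoUniformlyOn F f l s ↔
      ∀ k, TendstoUniformlyOn (fun n a => F n a k) (fun a => f a k) l s := by
  simp only [tendstoUniformlyOn_iff_tendsto, Pi.uniformity, tendsto_iInf, tendsto_comap_iff,
    Function.comp_def]

theorem tendstoUniformlyOn_prodMk_right [UniformSpace β] [UniformSpace γ]
    {F : ι → α → β} {f : α → β} (hF : TendstoUniformlyOn F f l s) (g : α → γ) :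
    TendstoUniformlyOn (fun n a => (F n a, g a)) (fun a => (f a, g a)) l s := by
  have hg : TendstoUniformlyOn (fun _ : ι => g) g l s :=
    fun _ hV => .of_forall fun _ _ _ => refl_mem_uniformity hV
  exact fun V hV => ((hF.prodMk hg) V hV).diag_of_prod

theorem tendstoUniformlyOn_comp_of_uniformContinuousOn [UniformSpace β] [UniformSpace γ]
    {F : ι → β → γ} {f : β → γ} {t : Set β} (hF : TendstoUniformlyOn F f l t)
    (hf : UniformContinuousOn f t) {G : ι → α → β} {g : α → β} (hG : TendstoUniformlyOn G g l s)
    (hGt : ∀ᶠ n in l, MapsTo (G n) s t) (hgt : MapsTo g s t) :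
    TendstoUniformlyOn (fun n => F n ∘ G n) (f ∘ g) l s := by
  intro V hV
  obtain ⟨W, hW, hWV⟩ := comp_mem_uniformity_sets hV
  have hfG : TendstoUniformlyOn (fun n => f ∘ G n) (f ∘ g) l s :=
    hf.comp_tendstoUniformlyOn_eventually hGt hgt hG
  filter_upwards [hfG W hW, hF W hW, hGt] with n hfGn hFn hGn a ha
  exact hWV ⟨f (G n a), hfGn a ha, hFn (G n a) (hGn ha)⟩

theorem eventually_mapsTo_of_thickening_image_subset [PseudoMetricSpace β]
    {F : ι → α → β} {f : α → β} (hF : TendstoUniformlyOn F f l s) {ε : ℝ} (hε : 0 < ε)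
    {t : Set β} (ht : Metric.thickening ε (f '' s) ⊆ t) :
    ∀ᶠ n in l, MapsTo (F n) s t := by
  filter_upwards [Metric.tendstoUniformlyOn_iff.1 hF ε hε] with n hn a ha
  exact ht (Metric.mem_thickening_iff.2 ⟨f a, mem_image_of_mem f ha, dist_comm (f a) _ ▸ hn a ha⟩)

end UniformConvergence

section Generator

variable {ι : Type*} {X N : ι → Type*} {Pa : ι → Finset ι} {K : ∀ i, Set (N i)}

/-- `G` is the generator of the functional causal model with parent sets `Pa` and mechanisms `f`,
for the noise vectors in `S`: each coordinate of `G e` is the value of its mechanism at the parent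
coordinates and its own noise. The recursion is stated as a system of equations, which determines
`G` on `S` when the parent relation is well-founded. -/
def IsGeneratorOn (Pa : ι → Finset ι) (f : ∀ i, (∀ j : Pa i, X j) → N i → X i)
    (S : Set (∀ i, N i)) (G : (∀ i, N i) → ∀ i, X i) : Prop :=
  ∀ e ∈ S, ∀ i, G e i = f i ((Pa i).restrict (G e)) (e i)

variable [∀ i, PseudoMetricSpace (X i)] [∀ i, UniformSpace (N i)]
  {f : ∀ i, (∀ j : Pa i, X j) → N i → X i} {G : (∀ i, N i) → ∀ i, X i}
  {C : ∀ i, Set (∀ j : Pa i, X j)} {ε₀ : ℝ}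

theorem IsGeneratorOn.tendstoUniformlyOn_apply_of_parents {κ : Type*} {l : Filter κ}
    {F : κ → ∀ i, (∀ j : Pa i, X j) → N i → X i} {H : κ → (∀ i, N i) → ∀ i, X i}
    (hG : IsGeneratorOn Pa f (univ.pi K) G) (hH : ∀ n, IsGeneratorOn Pa (F n) (univ.pi K) (H n))
    (hε₀ : 0 < ε₀) {i : ι}
    (hC : Metric.thickening ε₀ ((fun e => (Pa i).restrict (G e)) '' univ.pi K) ⊆ C i)
    (hf : UniformContinuousOn (fun q : (∀ j : Pa i, X j) × N i => f i q.1 q.2) (C i ×ˢ K i))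
    (hF : TendstoUniformlyOn (fun n q => F n i q.1 q.2) (fun q => f i q.1 q.2) l (C i ×ˢ K i))
    (hparents : ∀ j ∈ Pa i,
      TendstoUniformlyOn (fun n e => H n e j) (fun e => G e j) l (univ.pi K)) :
    TendstoUniformlyOn (fun n e => H n e i) (fun e => G e i) l (univ.pi K) := by
  have hrestrict : TendstoUniformlyOn (fun n e => (Pa i).restrict (H n e))
      (fun e => (Pa i).restrict (G e)) l (univ.pi K) :=
    tendstoUniformlyOn_pi.2 fun j => hparents j j.2
  have hGC : MapsTo (fun e => (Pa i).restrict (G e)) (univ.pi K) (C i) := fun e he =>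
    hC (Metric.self_subset_thickening hε₀ _ (mem_image_of_mem _ he))
  have hHC : ∀ᶠ n in l, MapsTo (fun e => (Pa i).restrict (H n e)) (univ.pi K) (C i) :=
    eventually_mapsTo_of_thickening_image_subset hrestrict hε₀ hC
  have hcomp := tendstoUniformlyOn_comp_of_uniformContinuousOn hF hf
    (tendstoUniformlyOn_prodMk_right hrestrict fun e => e i)
    (hHC.mono fun n hn e he => ⟨hn he, he i (mem_univ i)⟩)
    (fun e he => ⟨hGC he, he i (mem_univ i)⟩)
  exact (hcomp.congr (.of_forall fun n e he => (hH n e he i).symm)).congr_right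
    fun e he => (hG e he i).symm

theorem IsGeneratorOn.tendstoUniformlyOn {κ : Type*} {l : Filter κ}
    {F : κ → ∀ i, (∀ j : Pa i, X j) → N i → X i} {H : κ → (∀ i, N i) → ∀ i, X i}
    (hPa : WellFounded fun j i => j ∈ Pa i)
    (hG : IsGeneratorOn Pa f (univ.pi K) G) (hH : ∀ n, IsGeneratorOn Pa (F n) (univ.pi K) (H n))
    (hε₀ : 0 < ε₀)
    (hC : ∀ i, Metric.thickening ε₀ ((fun e => (Pa i).restrict (G e)) '' univ.pi K) ⊆ C i)
    (hf : ∀ i,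
      UniformContinuousOn (fun q : (∀ j : Pa i, X j) × N i => f i q.1 q.2) (C i ×ˢ K i))
    (hF : ∀ i,
      TendstoUniformlyOn (fun n q => F n i q.1 q.2) (fun q => f i q.1 q.2) l (C i ×ˢ K i)) :
    TendstoUniformlyOn H G l (univ.pi K) :=
  tendstoUniformlyOn_pi.2 fun i => hPa.induction i fun i =>
    hG.tendstoUniformlyOn_apply_of_parents hH hε₀ (hC i) (hf i) (hF i)

theorem stmt5_general [Fintype ι] (hPa : WellFounded fun j i => j ∈ Pa i)
    (hf : ∀ i,
      UniformContinuousOn (fun q : (∀ j : Pa i, X j) × N i => f i q.1 q.2) (C i ×ˢ K i))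
    (hG : IsGeneratorOn Pa f (univ.pi K) G) (hε₀ : 0 < ε₀)
    (hC : ∀ i, Metric.thickening ε₀ ((fun e => (Pa i).restrict (G e)) '' univ.pi K) ⊆ C i)
    {ε : ℝ} (hε : 0 < ε) :
    ∃ η > (0 : ℝ), ∀ fhat : ∀ i, (∀ j : Pa i, X j) → N i → X i,
      (∀ i, ∀ u ∈ C i, ∀ t ∈ K i, dist (fhat i u t) (f i u t) < η) →
      ∀ Ghat, IsGeneratorOn Pa fhat (univ.pi K) Ghat →
        ∀ e ∈ univ.pi K, dist (G e) (Ghat e) < ε := by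
  by_contra! hbad
  choose fhat hclose Ghat hGhat e he hfar using fun n : ℕ => hbad (1 / (n + 1)) (by positivity)
  have hfhat (i : ι) : TendstoUniformlyOn (fun n q => fhat n i q.1 q.2) (fun q => f i q.1 q.2)
      atTop (C i ×ˢ K i) := by
    refine Metric.tendstoUniformlyOn_iff.2 fun δ hδ => ?_
    filter_upwards [tendsto_one_div_add_atTop_nhds_zero_nat.eventually_lt_const hδ] with n hn q hq
    rw [dist_comm]
    exact (hclose n i q.1 hq.1 q.2 hq.2).trans hn
  have hlim : TendstoUniformlyOn Ghat G atTop (univ.pi K) :=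
    hG.tendstoUniformlyOn hPa hGhat hε₀ hC hf hfhat
  obtain ⟨n, hn⟩ := (Metric.tendstoUniformlyOn_iff.1 hlim ε hε).exists
  exact (hn (e n) (he n)).not_ge (hfar n)

end Generator

/-- abstract form of Proposition 2: the recursive FCM generator depends
continuously, in supremum norm over the noise cube `[0,1]^d`, on the causal mechanisms.
Given a DAG with parent sets `Pa i ⊆ {j < i}`, continuous mechanisms `fᵢ`, the generator `G`
defined by `G e i = fᵢ((G e)_{Pa i}, eᵢ)`, and compact sets `Cᵢ` containing the closed
`ε₀`-neighborhood of the range of `e ↦ (G e)_{Pa i}` over the cube, for every `ε ∈ (0, ε₀]`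
there is `η > 0` such that any continuous mechanisms `f̂ᵢ` that are `η`-close to `fᵢ` on
`Cᵢ × [0,1]` produce a generator `Ĝ` with `‖G e − Ĝ e‖ < ε` for all `e ∈ [0,1]^d`. -/
theorem stmt5 (d : ℕ)
    (Pa : Fin d → Finset (Fin d)) (hPa : ∀ i, ∀ j ∈ Pa i, j < i)
    (f : (i : Fin d) → (↥(Pa i) → ℝ) → ℝ → ℝ)
    (hf : ∀ i, Continuous fun q : (↥(Pa i) → ℝ) × ℝ => f i q.1 q.2)
    (G : (Fin d → ℝ) → Fin d → ℝ)
    (hG : ∀ (e : Fin d → ℝ) (i : Fin d), G e i = f i (fun j => G e j.1) (e i))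
    (ε₀ : ℝ) (hε₀ : 0 < ε₀)
    (C : (i : Fin d) → Set (↥(Pa i) → ℝ))
    (hCcompact : ∀ i, IsCompact (C i))
    (hC : ∀ i, Metric.cthickening ε₀
        ((fun e : Fin d → ℝ => fun j : ↥(Pa i) => G e j.1) ''
          (Set.univ.pi fun _ : Fin d => Icc (0:ℝ) 1)) ⊆ C i) :
    ∀ ε : ℝ, 0 < ε → ε ≤ ε₀ →
      ∃ η > (0:ℝ), ∀ fhat : (i : Fin d) → (↥(Pa i) → ℝ) → ℝ → ℝ,
        (∀ i, Continuous fun q : (↥(Pa i) → ℝ) × ℝ => fhat i q.1 q.2) →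
        (∀ i, ∀ u ∈ C i, ∀ e ∈ Icc (0:ℝ) 1, |fhat i u e - f i u e| < η) →
        ∀ Ghat : (Fin d → ℝ) → Fin d → ℝ,
          (∀ (e : Fin d → ℝ) (i : Fin d), Ghat e i = fhat i (fun j => Ghat e j.1) (e i)) →
          ∀ e ∈ Set.univ.pi fun _ : Fin d => Icc (0:ℝ) 1, ‖G e - Ghat e‖ < ε := by
  intro ε hε _
  have hf_unif (i : Fin d) : UniformContinuousOn (fun q : (↥(Pa i) → ℝ) × ℝ => f i q.1 q.2)
      (C i ×ˢ Icc (0 : ℝ) 1) :=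
    ((hCcompact i).prod isCompact_Icc).uniformContinuousOn_of_continuous (hf i).continuousOn
  obtain ⟨η, hη, hclose⟩ := stmt5_general (wellFounded_lt.mono fun j i => hPa i j) hf_unif
    (fun e _ => hG e) hε₀ (fun i => (Metric.thickening_subset_cthickening _ _).trans (hC i)) hε
  refine ⟨η, hη, fun fhat _ hfhat Ghat hGhat e he => ?_⟩
  rw [← dist_eq_norm]
  exact hclose fhat hfhat Ghat (fun e _ => hGhat e) e he
end

section
/- Call a function φ : ℝ^q → ℝ a one-hidden-layer ReLU network if there exist N ∈ ℕ, real coefficients c_0, c_1, …, c_N, vectors w_1, …, w_N ∈ ℝ^q, and biases b_1, …, b_N ∈ ℝ such that φ(u) = c_0 + Σ_{j=1}^{N} c_j · max(0, ⟨w_j, u⟩ + b_j). Let G be a directed acyclic graph on {1,…,d} with parent sets Pa(i) ⊆ {1,…,i−1} (indices in a topological order of G), let f_i : ℝ^{|Pa(i)|} × [0,1] → ℝ be continuous functions, and define the generator G_f : [0,1]^d → ℝ^d recursively in topological order by G_f(e)_i = f_i((G_f(e)_j)_{j ∈ Pa(i)}, e_i). Then for every ε > 0 there exist one-hidden-layer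 ReLU networks f̂_i : ℝ^{|Pa(i)|+1} → ℝ such that the generator G_{f̂} defined recursively from the f̂_i satisfies sup_{e ∈ [0,1]^d} ‖G_f(e) − G_{f̂}(e)‖ < ε. -/
open Set

/-- A one-hidden-layer ReLU network on `ℝ^α`: `φ u = c₀ + ∑ⱼ cⱼ · max(0, ⟨wⱼ, u⟩ + bⱼ)`. -/
def IsOneHiddenLayerReLUNet {α : Type*} [Fintype α] (φ : (α → ℝ) → ℝ) : Prop :=
  ∃ (N : ℕ) (c₀ : ℝ) (c : Fin N → ℝ) (w : Fin N → α → ℝ) (bias : Fin N → ℝ),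
    ∀ u : α → ℝ, φ u = c₀ + ∑ j, c j * max 0 ((∑ l, w j l * u l) + bias j)

/-! The generator is a jointly continuous function of its mechanisms (in the compact-open topology)
and of the noise, by induction along the graph. Hence replacing the mechanisms by elements of dense
sets approximates the generator uniformly on compact sets of noise, and it remains to see that ReLU
networks are dense. In one variable piecewise linear interpolants are ReLU networks, so every
function `h ∘ ℓ` with `h` continuous and `ℓ` a continuous linear functional is a limit of networks.
The functions `exp ∘ ℓ` form a monoid under multiplication, so their span is a subalgebra, which is
dense by Stone–Weierstrass. -/

section CompactOpen

variable {X Y : Type*} [TopologicalSpace X]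

lemma mem_closure_iff_forall_isCompact_exists_dist_lt [PseudoMetricSpace Y]
    {S : Set C(X, Y)} {f : C(X, Y)} :
    f ∈ closure S ↔
      ∀ K : Set X, IsCompact K → ∀ ε : ℝ, 0 < ε → ∃ g ∈ S, ∀ x ∈ K, dist (f x) (g x) < ε := by
  rw [mem_closure_iff_nhds_basis (nhds_basis_uniformity'
    (Filter.HasBasis.compactConvergenceUniformity Metric.uniformity_basis_dist))]
  simp [UniformSpace.ball, and_imp, Prod.forall, forall_comm (α := ℝ)]

lemma dense_of_separatesPoints {A : Subalgebra ℝ C(X, ℝ)} (hA : A.SeparatesPoints) :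
    Dense (A : Set C(X, ℝ)) := fun f =>
  mem_closure_iff_forall_isCompact_exists_dist_lt.mpr fun K hK ε hε => by
    obtain ⟨g, hgA, hg⟩ :=
      ContinuousMap.exists_mem_subalgebra_near_continuous_of_isCompact_of_separatesPoints hA f hK hε
    exact ⟨g, hgA, fun x hx => by rw [dist_comm, dist_eq_norm]; exact hg x hx⟩

end CompactOpen

section ReLUNetworks

variable {E F : Type*} [AddCommGroup E] [Module ℝ E] [TopologicalSpace E]
  [AddCommGroup F] [Module ℝ F] [TopologicalSpace F]

/-- The hidden ReLU unit `x ↦ max(0, ℓ x + b)` with weight functional `ℓ` and bias `b`. -/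
def reluNeuron (ℓ : StrongDual ℝ E) (b : ℝ) : C(E, ℝ) :=
  ⟨fun x => max 0 (ℓ x + b), by fun_prop⟩

variable (E) in
/-- The space of one-hidden-layer ReLU networks on a topological vector space `E`, in a form that
does not depend on coordinates. The output bias needs no separate generator: the neuron with
`ℓ = 0` and `b = 1` is the constant `1`. -/
def reluNetworks : Submodule ℝ C(E, ℝ) :=
  Submodule.span ℝ (range fun p : StrongDual ℝ E × ℝ => reluNeuron p.1 p.2)

lemma reluNeuron_mem_reluNetworks (ℓ : StrongDual ℝ E) (b : ℝ) :
    reluNeuron ℓ b ∈ reluNetworks E :=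
  Submodule.subset_span ⟨(ℓ, b), rfl⟩

lemma const_mem_reluNetworks (c : ℝ) : ContinuousMap.const E c ∈ reluNetworks E := by
  have h : ContinuousMap.const E c = c • reluNeuron (0 : StrongDual ℝ E) 1 := by
    ext x
    simp [reluNeuron]
  exact h ▸ Submodule.smul_mem _ _ (reluNeuron_mem_reluNetworks 0 1)

lemma comp_mem_reluNetworks {φ : C(F, ℝ)} (hφ : φ ∈ reluNetworks F) (L : E →L[ℝ] F) :
    φ.comp (L : C(E, F)) ∈ reluNetworks E := by
  induction hφ using Submodule.span_induction with
  | mem φ hφ =>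
    obtain ⟨⟨ℓ, b⟩, rfl⟩ := hφ
    exact reluNeuron_mem_reluNetworks (ℓ.comp L) b
  | zero => exact zero_mem _
  | add φ ψ _ _ hφ hψ => exact add_mem hφ hψ
  | smul c φ _ hφ => exact Submodule.smul_mem _ c hφ

end ReLUNetworks

namespace IsOneHiddenLayerReLUNet

variable {α : Type*} [Fintype α] {p q : (α → ℝ) → ℝ}

lemma zero : IsOneHiddenLayerReLUNet (0 : (α → ℝ) → ℝ) :=
  ⟨0, 0, 0, 0, 0, fun u => by simp⟩

lemma add (hp : IsOneHiddenLayerReLUNet p) (hq : IsOneHiddenLayerReLUNet q) :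
    IsOneHiddenLayerReLUNet (p + q) := by
  obtain ⟨N, c₀, c, w, b, hp⟩ := hp
  obtain ⟨N', c₀', c', w', b', hq⟩ := hq
  refine ⟨N + N', c₀ + c₀', Fin.append c c', Fin.append w w', Fin.append b b', fun u => ?_⟩
  simp only [Pi.add_apply, Fin.sum_univ_add, Fin.append_left, Fin.append_right, hp, hq]
  ring

lemma const_smul (hp : IsOneHiddenLayerReLUNet p) (a : ℝ) : IsOneHiddenLayerReLUNet (a • p) := by
  obtain ⟨N, c₀, c, w, b, hp⟩ := hp
  refine ⟨N, a * c₀, a • c, w, b, fun u => ?_⟩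
  simp only [Pi.smul_apply, smul_eq_mul, hp, mul_add, Finset.mul_sum, mul_assoc]

lemma max_zero_add (ℓ : (α → ℝ) →ₗ[ℝ] ℝ) (b : ℝ) :
    IsOneHiddenLayerReLUNet fun u => max 0 (ℓ u + b) := by
  classical
  refine ⟨1, 0, 1, fun _ l => ℓ fun j => if l = j then 1 else 0, fun _ => b, fun u => ?_⟩
  simp [LinearMap.pi_apply_eq_sum_univ ℓ u, mul_comm]

lemma of_mem_reluNetworks {E : Type*} [AddCommGroup E] [Module ℝ E] [TopologicalSpace E]
    {φ : C(E, ℝ)} (hφ : φ ∈ reluNetworks E) (L : (α → ℝ) →ₗ[ℝ] E) :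
    IsOneHiddenLayerReLUNet (φ ∘ L) := by
  induction hφ using Submodule.span_induction with
  | mem φ hφ =>
    obtain ⟨⟨ℓ, b⟩, rfl⟩ := hφ
    exact max_zero_add (ℓ.toLinearMap ∘ₗ L) b
  | zero => exact zero
  | add φ ψ _ _ hφ hψ => exact hφ.add hψ
  | smul c φ _ hφ => exact hφ.const_smul c

end IsOneHiddenLayerReLUNet

section Interpolation

/-- The ramp that is `0` to the left of `x`, `1` to the right of `x + δ`, and affine in between:
the building block of piecewise linear interpolation by ReLU networks. Meaningful for `0 < δ`. -/
noncomputable def reluRamp (x δ : ℝ) : C(ℝ, ℝ) :=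
  δ⁻¹ • (reluNeuron (.id ℝ ℝ) (-x) - reluNeuron (.id ℝ ℝ) (-(x + δ)))

/-- The piecewise linear interpolant of `h` at the nodes `a + k * δ`, `k ≤ n`, continued by
constants outside of `[a, a + n * δ]`. -/
noncomputable def rampInterpolant (h : ℝ → ℝ) (a δ : ℝ) (n : ℕ) : C(ℝ, ℝ) :=
  ContinuousMap.const ℝ (h a) +
    ∑ k ∈ Finset.range n, (h (a + (k + 1 : ℕ) * δ) - h (a + k * δ)) • reluRamp (a + k * δ) δ

variable {x a δ t : ℝ}

lemma reluRamp_apply (x δ t : ℝ) :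
    reluRamp x δ t = δ⁻¹ * (max 0 (t - x) - max 0 (t - (x + δ))) := by
  simp only [reluRamp, reluNeuron, sub_eq_add_neg, neg_add, ContinuousMap.smul_apply,
    ContinuousMap.add_apply, ContinuousMap.neg_apply, ContinuousMap.coe_mk,
    ContinuousLinearMap.id_apply, smul_eq_mul]

lemma reluRamp_of_le (hδ : 0 ≤ δ) (ht : t ≤ x) : reluRamp x δ t = 0 := by
  rw [reluRamp_apply, max_eq_left (by linarith), max_eq_left (by linarith), sub_self, mul_zero]

lemma reluRamp_of_ge (hδ : 0 < δ) (ht : x + δ ≤ t) : reluRamp x δ t = 1 := by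
  rw [reluRamp_apply, max_eq_right (by linarith), max_eq_right (by linarith)]
  field_simp
  ring

lemma reluRamp_mem_Icc (hδ : 0 < δ) (ht : t ∈ Icc x (x + δ)) : reluRamp x δ t ∈ Icc 0 1 := by
  rw [reluRamp_apply, max_eq_right (by linarith [ht.1]), max_eq_left (by linarith [ht.2]), sub_zero,
    inv_mul_eq_div]
  exact ⟨div_nonneg (by linarith [ht.1]) hδ.le, (div_le_one hδ).mpr (by linarith [ht.2])⟩

lemma rampInterpolant_mem_reluNetworks (h : ℝ → ℝ) (a δ : ℝ) (n : ℕ) :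
    rampInterpolant h a δ n ∈ reluNetworks ℝ := by
  refine add_mem (const_mem_reluNetworks _) (sum_mem fun k _ => ?_)
  exact Submodule.smul_mem _ _ <| Submodule.smul_mem _ _ <|
    sub_mem (reluNeuron_mem_reluNetworks _ _) (reluNeuron_mem_reluNetworks _ _)

lemma rampInterpolant_succ_apply (h : ℝ → ℝ) (a δ : ℝ) (n : ℕ) (t : ℝ) :
    rampInterpolant h a δ (n + 1) t = rampInterpolant h a δ n t +
      (h (a + (n + 1 : ℕ) * δ) - h (a + n * δ)) * reluRamp (a + n * δ) δ t := by
  simp only [rampInterpolant, Finset.sum_range_succ, ContinuousMap.add_apply,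
    ContinuousMap.smul_apply, smul_eq_mul, add_assoc]

lemma rampInterpolant_of_ge (h : ℝ → ℝ) (hδ : 0 < δ) {n : ℕ} (ht : a + n * δ ≤ t) :
    rampInterpolant h a δ n t = h (a + n * δ) := by
  induction n with
  | zero => simp [rampInterpolant]
  | succ n ih =>
    have hnode : a + (n + 1 : ℕ) * δ = a + n * δ + δ := by push_cast; ring
    rw [rampInterpolant_succ_apply, ih (by linarith), reluRamp_of_ge hδ (hnode ▸ ht)]
    ring

lemma rampInterpolant_mem_segment (h : ℝ → ℝ) (hδ : 0 < δ) {k n : ℕ} (hkn : k < n)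
    (ht : t ∈ Icc (a + k * δ) (a + (k + 1 : ℕ) * δ)) :
    rampInterpolant h a δ n t ∈ segment ℝ (h (a + k * δ)) (h (a + (k + 1 : ℕ) * δ)) := by
  have hnode : a + (k + 1 : ℕ) * δ = a + k * δ + δ := by push_cast; ring
  induction n, hkn using Nat.le_induction with
  | base =>
    rw [rampInterpolant_succ_apply, rampInterpolant_of_ge h hδ ht.1, segment_eq_image']
    exact ⟨_, reluRamp_mem_Icc hδ (hnode ▸ ht), congrArg (_ + ·) (mul_comm _ _)⟩
  | succ n hkn ih =>
    have htn : t ≤ a + n * δ := ht.2.trans (by gcongr)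
    rwa [rampInterpolant_succ_apply, reluRamp_of_le hδ.le htn, mul_zero, add_zero]

lemma exists_mem_Icc_grid (hδ : 0 < δ) {n : ℕ} (ht : t ∈ Ico a (a + n * δ)) :
    ∃ k < n, t ∈ Icc (a + k * δ) (a + (k + 1 : ℕ) * δ) := by
  have hpos : 0 ≤ (t - a) / δ := div_nonneg (sub_nonneg.mpr ht.1) hδ.le
  have hlt : (t - a) / δ < n := (div_lt_iff₀ hδ).mpr (by linarith [ht.2])
  have hfloor := (le_div_iff₀ hδ).mp (Nat.floor_le hpos)
  have hceil := (div_lt_iff₀ hδ).mp (Nat.lt_floor_add_one ((t - a) / δ))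
  refine ⟨⌊(t - a) / δ⌋₊, (Nat.floor_lt hpos).mpr hlt, by linarith, ?_⟩
  push_cast
  linarith

lemma dist_rampInterpolant_lt {h : ℝ → ℝ} (hδ : 0 < δ) {n : ℕ} (ht : t ∈ Ico a (a + n * δ)) {ε : ℝ}
    (hh : ∀ s, dist t s ≤ δ → dist (h t) (h s) < ε) :
    dist (h t) (rampInterpolant h a δ n t) < ε := by
  obtain ⟨k, hkn, hk⟩ := exists_mem_Icc_grid hδ ht
  have hnode : a + (k + 1 : ℕ) * δ = a + k * δ + δ := by push_cast; ring
  have hleft : h (a + k * δ) ∈ Metric.ball (h t) ε :=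
    Metric.mem_ball'.mpr <| hh _ <| abs_le.mpr ⟨by linarith [hk.1], by linarith [hk.2]⟩
  have hright : h (a + (k + 1 : ℕ) * δ) ∈ Metric.ball (h t) ε :=
    Metric.mem_ball'.mpr <| hh _ <| abs_le.mpr ⟨by linarith [hk.1], by linarith [hk.2]⟩
  exact Metric.mem_ball'.mp <|
    (convex_ball _ _).segment_subset hleft hright (rampInterpolant_mem_segment h hδ hkn hk)

end Interpolation

lemma dense_reluNetworks_real : Dense (reluNetworks ℝ : Set C(ℝ, ℝ)) := fun h => by
  refine mem_closure_iff_forall_isCompact_exists_dist_lt.mpr fun K hK ε hε => ?_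
  obtain ⟨a, ha⟩ := hK.bddBelow
  obtain ⟨b, hb⟩ := hK.bddAbove
  obtain ⟨η, hη, hcont⟩ := Metric.mem_uniformity_dist.mp <|
    hK.uniformContinuousAt_of_continuousAt h (fun t _ => h.continuous.continuousAt)
      (Metric.dist_mem_uniformity hε)
  obtain ⟨n, hn⟩ := exists_nat_gt ((b - a) / (η / 2))
  have hbn : b < a + n * (η / 2) := by linarith [(div_lt_iff₀ (half_pos hη)).mp hn]
  exact ⟨_, rampInterpolant_mem_reluNetworks h a (η / 2) n, fun t ht =>
    dist_rampInterpolant_lt (half_pos hη) ⟨ha ht, (hb ht).trans_lt hbn⟩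
      fun s hs => hcont (hs.trans_lt (half_lt_self hη)) ht⟩

section Density

variable {E : Type*} [AddCommGroup E] [Module ℝ E] [TopologicalSpace E]

lemma comp_mem_closure_reluNetworks (h : C(ℝ, ℝ)) (ℓ : StrongDual ℝ E) :
    h.comp (ℓ : C(E, ℝ)) ∈ closure (reluNetworks E : Set C(E, ℝ)) :=
  map_mem_closure (f := fun g : C(ℝ, ℝ) => g.comp (ℓ : C(E, ℝ)))
    (ContinuousMap.continuous_precomp _) (dense_reluNetworks_real h)
    fun _ hφ => comp_mem_reluNetworks hφ ℓ

variable (E) in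
/-- The multiplicative monoid of the functions `x ↦ exp (ℓ x)` with `ℓ` a continuous linear
functional, whose span is the subalgebra to which Stone–Weierstrass is applied. -/
noncomputable def expDual : Submonoid C(E, ℝ) where
  carrier := range fun ℓ : StrongDual ℝ E =>
    (⟨Real.exp, Real.continuous_exp⟩ : C(ℝ, ℝ)).comp (ℓ : C(E, ℝ))
  one_mem' := ⟨0, by ext x; simp⟩
  mul_mem' := by
    rintro _ _ ⟨ℓ, rfl⟩ ⟨m, rfl⟩
    exact ⟨ℓ + m, by ext x; simp [Real.exp_add]⟩

lemma separatesPoints_adjoin_expDual [SeparatingDual ℝ E] :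
    (Algebra.adjoin ℝ (expDual E : Set C(E, ℝ))).SeparatesPoints := fun x y hxy => by
  obtain ⟨ℓ, hℓ⟩ := SeparatingDual.exists_separating_of_ne (R := ℝ) hxy
  exact ⟨_, ⟨_, Algebra.subset_adjoin ⟨ℓ, rfl⟩, rfl⟩, fun h => hℓ (Real.exp_injective h)⟩

lemma dense_reluNetworks [SeparatingDual ℝ E] : Dense (reluNetworks E : Set C(E, ℝ)) := by
  have hexp : (expDual E : Set C(E, ℝ)) ⊆ (reluNetworks E).topologicalClosure := by
    rintro _ ⟨ℓ, rfl⟩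
    exact comp_mem_closure_reluNetworks _ ℓ
  have hspan : Subalgebra.toSubmodule (Algebra.adjoin ℝ (expDual E : Set C(E, ℝ))) ≤
      (reluNetworks E).topologicalClosure := by
    rw [Algebra.adjoin_eq_span, Submonoid.closure_eq]
    exact Submodule.span_le.mpr hexp
  exact (dense_of_separatesPoints separatesPoints_adjoin_expDual).mono hspan |>.of_closure

end Density

section Generator

variable {ι : Type*} [LT ι] {V W : ι → Type*} {Pa : ι → Finset ι}

/-- The generator of a functional causal model: the variables computed recursively along the graph
with parent sets `Pa i` from the noise `e` by the mechanisms `F i`. A mechanism takes the pair of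
the parents' values and the noise at `i`, and `<` plays the role of a topological order of
the graph. -/
def generator [WellFoundedLT ι] (hPa : ∀ i, ∀ j ∈ Pa i, j < i)
    (F : ∀ i, (∀ j : Pa i, V j) × W i → V i) (e : ∀ i, W i) (i : ι) : V i :=
  F i (fun j => generator hPa F e j, e i)
termination_by wellFounded_lt.wrap i
decreasing_by exact hPa i j j.2

variable [WellFoundedLT ι] {hPa : ∀ i, ∀ j ∈ Pa i, j < i}

lemma generator_apply (F : ∀ i, (∀ j : Pa i, V j) × W i → V i) (e : ∀ i, W i) (i : ι) :
    generator hPa F e i = F i (fun j => generator hPa F e j, e i) := by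
  rw [generator]

lemma eq_generator {F : ∀ i, (∀ j : Pa i, V j) × W i → V i} {e : ∀ i, W i} {g : ∀ i, V i}
    (hg : ∀ i, g i = F i (fun j => g j, e i)) : g = generator hPa F e := by
  funext i
  induction i using WellFoundedLT.induction with
  | ind i ih =>
    rw [hg, generator_apply]
    exact congrArg (fun v => F i (v, e i)) (funext fun j => ih j (hPa i j j.2))

variable [∀ i, TopologicalSpace (W i)] [∀ i, LocallyCompactSpace (W i)]

lemma continuous_generator [∀ i, TopologicalSpace (V i)] [∀ i, LocallyCompactSpace (V i)] :
    Continuous fun p : (∀ i, C((∀ j : Pa i, V j) × W i, V i)) × (∀ i, W i) =>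
      generator hPa (fun i => p.1 i) p.2 := by
  refine continuous_pi fun i => ?_
  induction i using WellFoundedLT.induction with
  | ind i ih =>
    simp only [generator_apply (i := i)]
    have hparents : Continuous fun p : (∀ i, C((∀ j : Pa i, V j) × W i, V i)) × (∀ i, W i) =>
        fun j : Pa i => generator hPa (fun i => p.1 i) p.2 j :=
      continuous_pi fun j => ih j (hPa i j j.2)
    exact ((continuous_apply i).comp continuous_fst).eval
      (hparents.prodMk ((continuous_apply i).comp continuous_snd))

lemma exists_forall_dist_generator_lt [Fintype ι] [∀ i, PseudoMetricSpace (V i)]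
    [∀ i, LocallyCompactSpace (V i)] {S : ∀ i, Set C((∀ j : Pa i, V j) × W i, V i)}
    (hS : ∀ i, Dense (S i)) (F : ∀ i, C((∀ j : Pa i, V j) × W i, V i)) {K : Set (∀ i, W i)}
    (hK : IsCompact K) {ε : ℝ} (hε : 0 < ε) :
    ∃ F' : ∀ i, C((∀ j : Pa i, V j) × W i, V i), (∀ i, F' i ∈ S i) ∧
      ∀ e ∈ K, dist (generator hPa (fun i => F i) e) (generator hPa (fun i => F' i) e) < ε := by
  let Γ := ContinuousMap.curry ⟨_, continuous_generator (V := V) (W := W) (hPa := hPa)⟩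
  have hΓ : Γ F ∈ closure (Γ '' univ.pi S) :=
    image_closure_subset_closure_image Γ.continuous ⟨F, dense_pi univ (fun i _ => hS i) F, rfl⟩
  obtain ⟨_, ⟨F', hF', rfl⟩, hdist⟩ :=
    mem_closure_iff_forall_isCompact_exists_dist_lt.mp hΓ K hK ε hε
  exact ⟨F', fun i => hF' i (mem_univ i), hdist⟩

end Generator

theorem stmt6_general {ι : Type*} [Fintype ι] [Preorder ι]
    (Pa : ι → Finset ι) (hPa : ∀ i, ∀ j ∈ Pa i, j < i)
    (f : (i : ι) → (↥(Pa i) → ℝ) → ℝ → ℝ)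
    (hf : ∀ i, Continuous fun q : (↥(Pa i) → ℝ) × ℝ => f i q.1 q.2)
    (G : (ι → ℝ) → ι → ℝ)
    (hG : ∀ (e : ι → ℝ) (i : ι), G e i = f i (fun j => G e j.1) (e i))
    {K : Set (ι → ℝ)} (hK : IsCompact K) :
    ∀ ε : ℝ, 0 < ε →
      ∃ fhat : (i : ι) → (↥(Pa i) → ℝ) → ℝ → ℝ,
        (∀ i, IsOneHiddenLayerReLUNet
          (fun u : ↥(Pa i) ⊕ Unit → ℝ => fhat i (fun j => u (Sum.inl j)) (u (Sum.inr ())))) ∧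
        ∃ Ghat : (ι → ℝ) → ι → ℝ,
          (∀ (e : ι → ℝ) (i : ι), Ghat e i = fhat i (fun j => Ghat e j.1) (e i)) ∧
          ∀ e ∈ K, ‖G e - Ghat e‖ < ε := by
  intro ε hε
  obtain ⟨φ, hφ, hdist⟩ := exists_forall_dist_generator_lt (hPa := hPa)
    (fun i => dense_reluNetworks (E := (Pa i → ℝ) × ℝ)) (fun i => ⟨fun q => f i q.1 q.2, hf i⟩)
    hK hε
  refine ⟨fun i a t => φ i (a, t), fun i => ?_, generator hPa fun i => φ i, fun e i => ?_,
    fun e he => ?_⟩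
  · exact .of_mem_reluNetworks (hφ i)
      ((LinearMap.funLeft ℝ ℝ Sum.inl).prod (LinearMap.proj (Sum.inr ())))
  · rw [generator_apply]
  · have hGe : G e = generator hPa (fun i q => f i q.1 q.2) e := eq_generator (hG e)
    rw [← dist_eq_norm, hGe]
    exact hdist e he

/-- Proposition 2 of the paper, with one-hidden-layer ReLU networks: the
recursive FCM generator built from continuous mechanisms `fᵢ` along a DAG with parent sets
`Pa i ⊆ {j < i}` can be approximated, uniformly over the noise cube `[0,1]^d`, by the
generator built from one-hidden-layer ReLU networks `f̂ᵢ : ℝ^{|Pa i|+1} → ℝ`. -/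
theorem stmt6 (d : ℕ)
    (Pa : Fin d → Finset (Fin d)) (hPa : ∀ i, ∀ j ∈ Pa i, j < i)
    (f : (i : Fin d) → (↥(Pa i) → ℝ) → ℝ → ℝ)
    (hf : ∀ i, Continuous fun q : (↥(Pa i) → ℝ) × ℝ => f i q.1 q.2)
    (G : (Fin d → ℝ) → Fin d → ℝ)
    (hG : ∀ (e : Fin d → ℝ) (i : Fin d), G e i = f i (fun j => G e j.1) (e i)) :
    ∀ ε : ℝ, 0 < ε →
      ∃ fhat : (i : Fin d) → (↥(Pa i) → ℝ) → ℝ → ℝ,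
        (∀ i, IsOneHiddenLayerReLUNet
          (fun u : ↥(Pa i) ⊕ Unit → ℝ => fhat i (fun j => u (Sum.inl j)) (u (Sum.inr ())))) ∧
        ∃ Ghat : (Fin d → ℝ) → Fin d → ℝ,
          (∀ (e : Fin d → ℝ) (i : Fin d), Ghat e i = fhat i (fun j => Ghat e j.1) (e i)) ∧
          ∀ e ∈ Set.univ.pi fun _ : Fin d => Icc (0:ℝ) 1, ‖G e - Ghat e‖ < ε := by
  intro ε hε
  exact stmt6_general Pa hPa f hf G hG (isCompact_univ_pi fun _ => isCompact_Icc) ε hε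
end
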